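/- Let P = {p_0, …, p_{n+2}} ⊆ ℝ² be a configuration of n+3 distinct points whose convex hull is two-dimensional, such that every point of P is either a vertex (extreme point) of conv(P) or lies in the relative interior of an edge of conv(P), and each edge of conv(P) contains at most one point of P in its relative interior. Let Q = {q_0, …, q_{n+2}} ⊆ ℝ² be a configuration of n+3 distinct points in convex position (every point of Q is an extreme point of conv(Q)). Then there is a bijection between the set of triangulations of P and the set of triangulations of Q. -/

import Mathlib

open MeasureTheory

/-- Area (2-dimensional Lebesgue measure) of the convex hull of the points
indexed by `σ`. -/
noncomputable def triArea {m : ℕ} (v : Fin m → ℝ × ℝ) (σ : Finset (Fin m)) : ℝ :=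
  (volume (convexHull ℝ (v '' ↑σ))).toReal

/-- `T` is a triangulation of the planar point configuration `v`:
a finite set of affinely independent triples whose convex hulls cover the
convex hull of the configuration, any two of which meet in a common
(extreme) face of each. -/
def IsTriangulation {m : ℕ} (v : Fin m → ℝ × ℝ) (T : Finset (Finset (Fin m))) : Prop :=
  (∀ σ ∈ T, σ.card = 3 ∧ AffineIndependent ℝ (fun i : {x // x ∈ σ} => v i.1)) ∧
  (⋃ σ ∈ T, convexHull ℝ (v '' ↑σ)) = convexHull ℝ (Set.range v) ∧
  ∀ σ ∈ T, ∀ τ ∈ T,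
    IsExtreme ℝ (convexHull ℝ (v '' ↑σ)) (convexHull ℝ (v '' ↑σ) ∩ convexHull ℝ (v '' ↑τ)) ∧
    IsExtreme ℝ (convexHull ℝ (v '' ↑τ)) (convexHull ℝ (v '' ↑σ) ∩ convexHull ℝ (v '' ↑τ))

/-- The GKZ vector of a triangulation `T` with respect to the vectors `f i`:
`GKZ(T) = ∑ i (∑ {σ ∈ T : i ∈ σ} vol σ) • f i`. -/
noncomputable def GKZ {m : ℕ} {E : Type*} [AddCommGroup E] [Module ℝ E]
    (v : Fin m → ℝ × ℝ) (f : Fin m → E) (T : Finset (Finset (Fin m))) : E :=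
  ∑ i, (∑ σ ∈ T.filter (fun σ => i ∈ σ), triArea v σ) • f i

/-!
Sort the points counterclockwise by angle, as seen from a point in the interior of an edge, or from
a vertex if there is no such point. The triangulations of the points from the `i`-th to the `j`-th
then satisfy the Catalan recursion: the segment from `i` to `j` is a side of exactly one triangle
`i k j`, which separates a triangulation of `i, …, k` from one of `k, …, j`. The only exception
occurs when some point `k` makes `i k j` flat; the triangle may then be missing, but the
triangulation still splits at this `k`, as if the flat triangle were there. So the number of
triangulations is a Catalan number which depends only on the number of points.
-/

section Convexity

variable {E ι : Type*} [AddCommGroup E] [Module ℝ E]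

/-- The convex hull of the points of the family `v` with index in `σ`. -/
abbrev vertexHull (v : ι → E) (σ : Finset ι) : Set E := convexHull ℝ (v '' ↑σ)

theorem mem_vertexHull {v : ι → E} {σ : Finset ι} {i : ι} (hi : i ∈ σ) : v i ∈ vertexHull v σ :=
  subset_convexHull ℝ _ ⟨i, hi, rfl⟩

theorem vertexHull_mono {v : ι → E} {σ τ : Finset ι} (h : σ ⊆ τ) :
    vertexHull v σ ⊆ vertexHull v τ :=
  convexHull_mono (Set.image_mono h)

theorem vertexHull_subset_range (v : ι → E) (σ : Finset ι) :
    vertexHull v σ ⊆ convexHull ℝ (Set.range v) :=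
  convexHull_mono (Set.image_subset_range _ _)

theorem segment_subset_vertexHull {v : ι → E} {σ : Finset ι} {i j : ι} (hi : i ∈ σ) (hj : j ∈ σ) :
    segment ℝ (v i) (v j) ⊆ vertexHull v σ :=
  (convex_convexHull ℝ _).segment_subset (mem_vertexHull hi) (mem_vertexHull hj)

theorem vertexHull_pair [DecidableEq ι] (v : ι → E) (i j : ι) :
    vertexHull v {i, j} = segment ℝ (v i) (v j) := by
  simp [vertexHull, Set.image_pair]

theorem exists_mem_vertexHull_card_eq [Module.Finite ℝ E] {v : ι → E} {σ : Finset ι} {x : E}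
    (hσ : Module.finrank ℝ E + 1 ≤ σ.card) (hx : x ∈ vertexHull v σ) :
    ∃ ρ ⊆ σ, ρ.card = Module.finrank ℝ E + 1 ∧ x ∈ vertexHull v ρ := by
  classical
  rw [vertexHull, convexHull_eq_union] at hx
  simp only [Set.mem_iUnion] at hx
  obtain ⟨t, htσ, hind, hxt⟩ := hx
  obtain ⟨ρ', hρ'σ, hinj, rfl⟩ :=
    Finset.exists_subset_injOn_image_eq_of_surjOn σ (f := v) (t := t) htσ
  have hcard : ρ'.card ≤ Module.finrank ℝ E + 1 := by
    rw [← Finset.card_image_of_injOn hinj, ← Fintype.card_coe]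
    exact hind.card_le_finrank_succ.trans (by gcongr; exact Submodule.finrank_le _)
  obtain ⟨ρ, hρ'ρ, hρσ, hρ⟩ := Finset.exists_subsuperset_card_eq hρ'σ hcard hσ
  exact ⟨ρ, hρσ, hρ, vertexHull_mono hρ'ρ (by simpa [vertexHull] using hxt)⟩

theorem segment_subset_union {x y z : E} (hz : z ∈ segment ℝ x y) :
    segment ℝ x y ⊆ segment ℝ x z ∪ segment ℝ z y := by
  have hrange : z ∈ Set.range (AffineMap.lineMap (k := ℝ) x y) := by
    obtain ⟨t, -, ht⟩ := mem_segment_iff_wbtw.1 hz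
    exact ⟨t, ht⟩
  rw [← insert_endpoints_openSegment]
  rintro w (rfl | rfl | hw)
  · exact .inl (left_mem_segment ℝ _ _)
  · exact .inr (right_mem_segment ℝ _ _)
  rcases openSegment_subset_union x y hrange hw with rfl | h | h
  · exact .inl (right_mem_segment ℝ _ _)
  · exact .inl (openSegment_subset_segment ℝ _ _ h)
  · exact .inr (openSegment_subset_segment ℝ _ _ h)

theorem vertexHull_quadrilateral_subset [DecidableEq ι] {v : ι → E} {a b c d : ι} {o : E}
    (hac : o ∈ segment ℝ (v a) (v c)) (hbd : o ∈ segment ℝ (v b) (v d)) :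
    vertexHull v {a, b, c, d} ⊆ vertexHull v {a, b, c} ∪ vertexHull v {a, c, d} := by
  intro x hx
  have hx' : x ∈ convexJoin ℝ (segment ℝ (v a) (v c)) (segment ℝ (v b) (v d)) := by
    rw [convexJoin_segments]
    simpa [vertexHull, Set.image_insert_eq, Set.insert_comm] using hx
  obtain ⟨y, hy, z, hz, hxyz⟩ := mem_convexJoin.1 hx'
  rcases segment_subset_union hbd hz with hz | hz
  · have hsub : segment ℝ (v a) (v c) ⊆ vertexHull v {a, b, c} :=
      segment_subset_vertexHull (by simp) (by simp)
    have hzb := (convex_convexHull ℝ _).segment_subset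
      (mem_vertexHull (by simp : b ∈ ({a, b, c} : Finset ι))) (hsub hac) hz
    exact .inl ((convex_convexHull ℝ _).segment_subset (hsub hy) hzb hxyz)
  · have hsub : segment ℝ (v a) (v c) ⊆ vertexHull v {a, c, d} :=
      segment_subset_vertexHull (by simp) (by simp)
    have hzd := (convex_convexHull ℝ _).segment_subset (hsub hac)
      (mem_vertexHull (by simp : d ∈ ({a, c, d} : Finset ι))) hz
    exact .inr ((convex_convexHull ℝ _).segment_subset (hsub hy) hzd hxyz)

/-! ### Faces of convex sets -/

theorem inter_convexHull_subset_of_isExtreme {A B s : Set E} (hA : Convex ℝ A)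
    (hB : IsExtreme ℝ A B) (hs : s ⊆ A) : B ∩ convexHull ℝ s ⊆ convexHull ℝ (s ∩ B) := by
  rintro x ⟨hxB, hxs⟩
  have hdiff : convexHull ℝ (s \ B) ⊆ A \ B :=
    convexHull_min (Set.sdiff_subset_sdiff_left hs) (hB.convex_sdiff hA)
  rcases (s ∩ B).eq_empty_or_nonempty with hempty | hne
  · rw [← Set.sdiff_union_inter s B, hempty, Set.union_empty] at hxs
    exact absurd hxB (hdiff hxs).2
  rcases (s \ B).eq_empty_or_nonempty with hempty | hne'
  · rwa [Set.inter_eq_left.2 (Set.sdiff_eq_empty.1 hempty)]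
  rw [← Set.inter_union_sdiff s B, convexHull_union hne hne'] at hxs
  obtain ⟨y, hy, z, hz, hx⟩ := mem_convexJoin.1 hxs
  have hyA : y ∈ A := convexHull_min (Set.inter_subset_left.trans hs) hA hy
  by_cases hyx : y = x
  · exact hyx ▸ hy
  by_cases hzx : z = x
  · exact absurd (hzx ▸ hxB) (hdiff hz).2
  exact absurd (hB.right_mem_of_mem_openSegment hyA (hdiff hz).1 hxB
    (mem_openSegment_of_ne_left_right hyx hzx hx)) (hdiff hz).2

theorem left_mem_extremePoints_segment (x y : E) :
    x ∈ (segment ℝ x y).extremePoints ℝ := by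
  refine mem_extremePoints_iff_forall_segment.2 ⟨left_mem_segment ℝ _ _, fun u hu w hw hx => ?_⟩
  rw [mem_segment_iff_wbtw] at hx hu
  rcases segment_subset_union (mem_segment_iff_wbtw.2 hu) hw with h | h
  · exact .inr ((wbtw_swap_left_iff ℝ _).1 ⟨hx.symm, mem_segment_iff_wbtw.1 h⟩)
  · exact .inl ((wbtw_swap_left_iff ℝ _).1 ⟨hx, hu.trans_right_left (mem_segment_iff_wbtw.1 h)⟩)

theorem left_mem_extremePoints_of_isExtreme_segment {A : Set E} {x y : E}
    (h : IsExtreme ℝ A (segment ℝ x y)) : x ∈ A.extremePoints ℝ :=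
  h.extremePoints_subset_extremePoints (left_mem_extremePoints_segment x y)

theorem right_mem_extremePoints_of_isExtreme_segment {A : Set E} {x y : E}
    (h : IsExtreme ℝ A (segment ℝ x y)) : y ∈ A.extremePoints ℝ :=
  left_mem_extremePoints_of_isExtreme_segment (segment_symm ℝ x y ▸ h)

theorem mem_segment_of_isExtreme_of_collinear {A : Set E} {x y w : E}
    (h : IsExtreme ℝ A (segment ℝ x y)) (hxy : x ≠ y) (hw : w ∈ A)
    (hcol : Collinear ℝ {x, y, w}) : w ∈ segment ℝ x y := by
  have hx := h.subset (left_mem_segment ℝ x y)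
  have hy := h.subset (right_mem_segment ℝ x y)
  rcases hcol.wbtw_or_wbtw_or_wbtw with hb | hb | hb
  · rcases eq_or_ne w y with rfl | hwy
    · exact right_mem_segment ℝ _ _
    exact h.right_mem_of_mem_openSegment hx hw (right_mem_segment ℝ x y)
      (mem_openSegment_of_ne_left_right hxy hwy (mem_segment_iff_wbtw.2 hb))
  · exact mem_segment_iff_wbtw.2 hb.symm
  · rcases eq_or_ne w x with rfl | hwx
    · exact left_mem_segment ℝ _ _
    exact h.left_mem_of_mem_openSegment hw hy (left_mem_segment ℝ x y)
      (mem_openSegment_of_ne_left_right hwx hxy.symm (mem_segment_iff_wbtw.2 hb))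

theorem isExtreme_setOf_eq_zero {s : Set E} (f : E →ᵃ[ℝ] ℝ) (hf : ∀ x ∈ s, 0 ≤ f x) :
    IsExtreme ℝ s (s ∩ {x | f x = 0}) := by
  refine ⟨Set.inter_subset_left, ?_⟩
  rintro x hx y hy z ⟨-, hz⟩ ⟨a, b, ha, hb, hab, rfl⟩
  refine ⟨hx, ?_⟩
  have h : a * f x + b * f y = 0 := by
    simpa [Convex.combo_affine_apply hab] using hz
  have := mul_nonneg ha.le (hf x hx)
  have := mul_nonneg hb.le (hf y hy)
  exact (mul_eq_zero.1 (by linarith : a * f x = 0)).resolve_left ha.ne'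

theorem nonneg_of_mem_vertexHull {v : ι → E} {σ : Finset ι} (f : E →ᵃ[ℝ] ℝ)
    (hf : ∀ i ∈ σ, 0 ≤ f (v i)) {x : E} (hx : x ∈ vertexHull v σ) : 0 ≤ f x := by
  refine convexHull_min (t := {x | 0 ≤ f x}) ?_ ((convex_Ici 0).affine_preimage f) hx
  rintro _ ⟨i, hi, rfl⟩
  exact hf i hi

theorem mem_vertexHull_of_eq_zero {v : ι → E} {σ ρ : Finset ι} (f : E →ᵃ[ℝ] ℝ)
    (hf : ∀ i ∈ σ, 0 ≤ f (v i)) (hρ : ∀ i ∈ σ, f (v i) = 0 → i ∈ ρ) {x : E}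
    (hx : x ∈ vertexHull v σ) (hfx : f x = 0) : x ∈ vertexHull v ρ := by
  have hextr := isExtreme_setOf_eq_zero f fun _ => nonneg_of_mem_vertexHull f hf
  refine convexHull_mono ?_ (inter_convexHull_subset_of_isExtreme (convex_convexHull ℝ _) hextr
    (subset_convexHull ℝ _) ⟨⟨hx, hfx⟩, hx⟩)
  rintro _ ⟨⟨i, hi, rfl⟩, -, h0⟩
  exact ⟨i, hρ i hi h0, rfl⟩

/-! ### Simplices -/

theorem isExtreme_convexHull_of_affineIndependent {s t : Finset E}
    (hs : AffineIndependent ℝ ((↑) : s → E)) (hts : t ⊆ s) :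
    IsExtreme ℝ (convexHull ℝ (s : Set E)) (convexHull ℝ (t : Set E)) := by
  classical
  refine ⟨convexHull_mono (by exact_mod_cast hts), ?_⟩
  rintro x hx y hy _ hz ⟨a, b, ha, hb, hab, rfl⟩
  obtain ⟨u, hu0, hu1, rfl⟩ := Finset.mem_convexHull'.1 hx
  obtain ⟨w, hw0, hw1, rfl⟩ := Finset.mem_convexHull'.1 hy
  obtain ⟨c, -, hc1, hc⟩ := Finset.mem_convexHull'.1 hz
  have hsupp : ∀ i ∈ s, i ∉ t → u i = 0 := by
    intro i hi hit
    have hcoeff := hs.eq_zero_of_sum_eq_zero_subtype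
      (w := fun j => a * u j + b * w j - if j ∈ t then c j else 0)
      (by simp [Finset.sum_add_distrib, ← Finset.mul_sum, hu1, hw1, hab,
            Finset.inter_eq_right.2 hts, hc1])
      (by simp [sub_smul, add_smul, mul_smul, Finset.sum_add_distrib, ← Finset.smul_sum, ite_smul,
            Finset.inter_eq_right.2 hts, hc]) i hi
    simp only [hit, if_false, sub_zero] at hcoeff
    have := mul_nonneg ha.le (hu0 i hi)
    have := mul_nonneg hb.le (hw0 i hi)
    exact (mul_eq_zero.1 (by linarith : a * u i = 0)).resolve_left ha.ne'
  refine Finset.mem_convexHull'.2 ⟨u, fun i hi => hu0 i (hts hi), ?_, ?_⟩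
  · rwa [Finset.sum_subset hts hsupp]
  · exact Finset.sum_subset hts fun i hi hit => by rw [hsupp i hi hit, zero_smul]

variable {v : ι → E} {σ τ ρ : Finset ι}

theorem affineIndependent_coe_image [DecidableEq E]
    (hσ : AffineIndependent ℝ (fun i : {x // x ∈ σ} => v i.1)) :
    AffineIndependent ℝ ((↑) : σ.image v → E) := by
  refine hσ.range.mono fun x hx => ?_
  obtain ⟨i, hi, rfl⟩ := Finset.mem_image.1 hx
  exact ⟨⟨i, hi⟩, rfl⟩

theorem isExtreme_vertexHull_of_affineIndependent
    (hσ : AffineIndependent ℝ (fun i : {x // x ∈ σ} => v i.1)) (hρ : ρ ⊆ σ) :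
    IsExtreme ℝ (vertexHull v σ) (vertexHull v ρ) := by
  classical
  simpa [vertexHull] using isExtreme_convexHull_of_affineIndependent
    (affineIndependent_coe_image hσ) (Finset.image_subset_image hρ)

variable [DecidableEq ι]

theorem vertexHull_inter_subset_of_affineIndependent
    (hσ : AffineIndependent ℝ (fun i : {x // x ∈ σ} => v i.1)) (hτ : τ ⊆ σ) (hρ : ρ ⊆ σ) :
    vertexHull v τ ∩ vertexHull v ρ ⊆ vertexHull v (τ ∩ ρ) := by
  classical
  have hinj : Set.InjOn v σ := fun i hi j hj h =>
    congrArg Subtype.val (hσ.injective (a₁ := ⟨i, hi⟩) (a₂ := ⟨j, hj⟩) h)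
  have hinter := (affineIndependent_coe_image hσ).convexHull_inter
    (Finset.image_subset_image hτ) (Finset.image_subset_image hρ)
  simpa [vertexHull, hinj.image_inter (Finset.coe_subset.2 hτ) (Finset.coe_subset.2 hρ)]
    using hinter.ge

/-- The hulls of `σ` and `τ` meet in the hull of `σ ∩ τ`: the compatibility condition for the
simplices of a simplicial complex. -/
def MeetInCommonFace (v : ι → E) (σ τ : Finset ι) : Prop :=
  vertexHull v σ ∩ vertexHull v τ ⊆ vertexHull v (σ ∩ τ)

theorem MeetInCommonFace.symm (h : MeetInCommonFace v σ τ) : MeetInCommonFace v τ σ := by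
  rw [MeetInCommonFace, Set.inter_comm, Finset.inter_comm]
  exact h

theorem MeetInCommonFace.refl (v : ι → E) (σ : Finset ι) : MeetInCommonFace v σ σ := by
  simp [MeetInCommonFace]

theorem MeetInCommonFace.mono (h : MeetInCommonFace v σ τ)
    (hσ : AffineIndependent ℝ (fun i : {x // x ∈ σ} => v i.1))
    (hτ : AffineIndependent ℝ (fun i : {x // x ∈ τ} => v i.1)) {σ' τ' : Finset ι}
    (hσ' : σ' ⊆ σ) (hτ' : τ' ⊆ τ) : MeetInCommonFace v σ' τ' := by
  rintro x ⟨hxσ', hxτ'⟩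
  have hx := h ⟨vertexHull_mono hσ' hxσ', vertexHull_mono hτ' hxτ'⟩
  have hx' :=
    vertexHull_inter_subset_of_affineIndependent hσ hσ' Finset.inter_subset_left ⟨hxσ', hx⟩
  refine vertexHull_mono (fun i => ?_) (vertexHull_inter_subset_of_affineIndependent hτ hτ'
    (Finset.inter_subset_right.trans Finset.inter_subset_right) ⟨hxτ', hx'⟩)
  simp only [Finset.mem_inter]
  tauto

theorem MeetInCommonFace.vertexHull_inter_eq (h : MeetInCommonFace v σ τ) :
    vertexHull v σ ∩ vertexHull v τ = vertexHull v (σ ∩ τ) :=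
  h.antisymm (Set.subset_inter (vertexHull_mono Finset.inter_subset_left)
    (vertexHull_mono Finset.inter_subset_right))

theorem meetInCommonFace_of_isExtreme
    (hext : IsExtreme ℝ (vertexHull v σ) (vertexHull v σ ∩ vertexHull v τ))
    (hmem : ∀ i ∈ σ, v i ∈ vertexHull v τ → i ∈ τ) : MeetInCommonFace v σ τ := by
  intro x hx
  refine convexHull_mono ?_ (inter_convexHull_subset_of_isExtreme (convex_convexHull ℝ _) hext
    (subset_convexHull ℝ _) ⟨hx, hx.1⟩)
  rintro _ ⟨⟨i, hi, rfl⟩, -, hiτ⟩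
  exact ⟨i, Finset.mem_inter.2 ⟨hi, hmem i hi hiτ⟩, rfl⟩

theorem affineIndependent_pair {a b : ι} (hab : v a ≠ v b) :
    AffineIndependent ℝ (fun i : {x // x ∈ ({a, b} : Finset ι)} => v i.1) := by
  let e : {x // x ∈ ({a, b} : Finset ι)} ↪ Fin 2 :=
    ⟨fun i => if i.1 = a then 0 else 1, by
      rintro ⟨i, hi⟩ ⟨j, hj⟩ hij
      grind⟩
  have hfam : (fun i : {x // x ∈ ({a, b} : Finset ι)} => v i.1) = ![v a, v b] ∘ e := by
    funext ⟨i, hi⟩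
    change v i = ![v a, v b] (if i = a then 0 else 1)
    rcases Finset.mem_insert.1 hi with rfl | hi
    · simp
    · obtain rfl := Finset.mem_singleton.1 hi
      have : i ≠ a := fun h => hab (h ▸ rfl)
      simp [this]
  exact hfam ▸ (affineIndependent_of_ne ℝ hab).comp_embedding e

theorem meetInCommonFace_of_separated (f : E →ᵃ[ℝ] ℝ) (hσ : ∀ i ∈ σ, f (v i) ≤ 0)
    (hτ : ∀ i ∈ τ, 0 ≤ f (v i)) (hσρ : ∀ i ∈ σ, f (v i) = 0 → i ∈ ρ)
    (hτρ : ∀ i ∈ τ, f (v i) = 0 → i ∈ ρ)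
    (hρ : AffineIndependent ℝ (fun i : {x // x ∈ ρ} => v i.1)) : MeetInCommonFace v σ τ := by
  rintro x ⟨hxσ, hxτ⟩
  have hneg := nonneg_of_mem_vertexHull (-f) (by simpa using hσ) hxσ
  have hpos := nonneg_of_mem_vertexHull f hτ hxτ
  have hzero : f x = 0 := le_antisymm (by simpa using hneg) hpos
  have hxσ' : x ∈ vertexHull v (σ ∩ ρ) := mem_vertexHull_of_eq_zero (-f) (by simpa using hσ)
    (fun i hi h0 => Finset.mem_inter.2 ⟨hi, hσρ i hi (by simpa using h0)⟩) hxσ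
    (by simpa using hzero)
  have hxτ' : x ∈ vertexHull v (τ ∩ ρ) := mem_vertexHull_of_eq_zero f hτ
    (fun i hi h0 => Finset.mem_inter.2 ⟨hi, hτρ i hi h0⟩) hxτ hzero
  exact vertexHull_mono (Finset.inter_subset_inter Finset.inter_subset_left
    Finset.inter_subset_left) (vertexHull_inter_subset_of_affineIndependent hρ
      Finset.inter_subset_right Finset.inter_subset_right ⟨hxσ', hxτ'⟩)

end Convexity

/-! ### Orientation of planar triples -/

section Orientation

/-- Twice the signed area of the triangle `a b x`, as an affine function of `x`: it is positive to
the left of the line directed from `a` to `b` and vanishes on that line. -/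
noncomputable def orient (a b : ℝ × ℝ) : ℝ × ℝ →ᵃ[ℝ] ℝ :=
  ((b.1 - a.1) • LinearMap.snd ℝ ℝ ℝ - (b.2 - a.2) • LinearMap.fst ℝ ℝ ℝ).toAffineMap +
    AffineMap.const ℝ (ℝ × ℝ) ((b.2 - a.2) * a.1 - (b.1 - a.1) * a.2)

theorem orient_apply (a b c : ℝ × ℝ) :
    orient a b c = (b.1 - a.1) * (c.2 - a.2) - (b.2 - a.2) * (c.1 - a.1) := by
  simp only [orient, AffineMap.coe_add, Pi.add_apply, LinearMap.coe_toAffineMap,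
    LinearMap.sub_apply, LinearMap.smul_apply, LinearMap.snd_apply, LinearMap.fst_apply,
    smul_eq_mul, AffineMap.const_apply]
  ring

theorem orient_rotate (a b c : ℝ × ℝ) : orient b c a = orient a b c := by
  simp only [orient_apply]
  ring

theorem orient_swap (a b c : ℝ × ℝ) : orient b a c = -orient a b c := by
  simp only [orient_apply]
  ring

theorem orient_swap_right (a b c : ℝ × ℝ) : orient a c b = -orient a b c := by
  simp only [orient_apply]
  ring

@[simp]
theorem orient_self_left (a b : ℝ × ℝ) : orient a b a = 0 := by
  simp [orient_apply]

@[simp]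
theorem orient_self_right (a b : ℝ × ℝ) : orient a b b = 0 := by
  simp only [orient_apply]
  ring

theorem orient_add_orient (a b c d : ℝ × ℝ) :
    orient a b c + orient a c d = orient a b d + orient b c d := by
  simp only [orient_apply]
  ring

theorem orient_smul_eq (a b c d : ℝ × ℝ) :
    orient b c d • a + orient a b d • c = orient a c d • b + orient a b c • d := by
  ext <;> simp only [orient_apply, Prod.fst_add, Prod.snd_add, Prod.smul_fst, Prod.smul_snd,
    smul_eq_mul] <;> ring

theorem sum_sq_sub_pos {a b : ℝ × ℝ} (hab : a ≠ b) : 0 < (b.1 - a.1) ^ 2 + (b.2 - a.2) ^ 2 := by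
  by_contra! h
  exact hab (Prod.ext (by nlinarith) (by nlinarith))

theorem exists_orient_ne_zero {a b : ℝ × ℝ} (hab : a ≠ b) : ∃ c, orient a b c ≠ 0 := by
  refine ⟨(a.1 - (b.2 - a.2), a.2 + (b.1 - a.1)), fun h => (sum_sq_sub_pos hab).ne' ?_⟩
  rw [orient_apply] at h
  linear_combination h

theorem orient_eq_zero_iff_collinear {a b c : ℝ × ℝ} :
    orient a b c = 0 ↔ Collinear ℝ {a, b, c} := by
  rcases eq_or_ne a b with rfl | hab
  · simp [orient_apply, collinear_pair]
  rw [collinear_iff_of_mem (p₀ := a) (by simp)]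
  constructor
  · intro h
    refine ⟨b - a, ?_⟩
    have hpos := sum_sq_sub_pos hab
    simp only [Set.mem_insert_iff, Set.mem_singleton_iff, forall_eq_or_imp, forall_eq]
    refine ⟨⟨0, by simp⟩, ⟨1, by simp⟩, ((c.1 - a.1) * (b.1 - a.1) + (c.2 - a.2) * (b.2 - a.2)) /
      ((b.1 - a.1) ^ 2 + (b.2 - a.2) ^ 2), ?_⟩
    rw [orient_apply] at h
    ext
    · simp only [vadd_eq_add, Prod.fst_add, Prod.smul_fst, smul_eq_mul, Prod.fst_sub]
      field_simp
      linear_combination (-(b.2 - a.2)) * h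
    · simp only [vadd_eq_add, Prod.snd_add, Prod.smul_snd, smul_eq_mul, Prod.snd_sub]
      field_simp
      linear_combination (b.1 - a.1) * h
  · rintro ⟨u, hu⟩
    obtain ⟨r, rfl⟩ := hu b (by simp)
    obtain ⟨s, rfl⟩ := hu c (by simp)
    simp only [orient_apply, vadd_eq_add, Prod.fst_add, Prod.snd_add, Prod.smul_fst, Prod.smul_snd,
      smul_eq_mul, add_sub_cancel_right]
    ring

theorem orient_eq_zero_of_mem_segment {a b x : ℝ × ℝ} (hx : x ∈ segment ℝ a b) :
    orient a b x = 0 := by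
  have := orient_eq_zero_iff_collinear.2 (mem_segment_iff_wbtw.1 hx).collinear
  rw [orient_swap_right, this, neg_zero]

theorem collinear_of_orient_eq_zero {a b c d : ℝ × ℝ} (hab : a ≠ b) (hc : orient a b c = 0)
    (hd : orient a b d = 0) : Collinear ℝ {a, b, c, d} := by
  rw [orient_eq_zero_iff_collinear] at hc hd
  have := collinear_insert_insert_of_mem_affineSpan_pair
    (hc.mem_affineSpan_of_mem_of_ne (p₁ := a) (p₂ := b) (p₃ := c) (by simp) (by simp) (by simp) hab)
    (hd.mem_affineSpan_of_mem_of_ne (p₁ := a) (p₂ := b) (p₃ := d) (by simp) (by simp) (by simp) hab)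
  exact this.subset (by grind)

end Orientation

section Triangle

variable {E ι : Type*} [AddCommGroup E] [Module ℝ E]

/-- The points indexed by `σ` are the three vertices of a nondegenerate triangle. -/
def IsTriangle (v : ι → E) (σ : Finset ι) : Prop :=
  σ.card = 3 ∧ AffineIndependent ℝ (fun i : {x // x ∈ σ} => v i.1)

theorem affineIndependent_iff_not_collinear_of_card_eq_three {v : ι → E} {σ : Finset ι}
    (hσ : σ.card = 3) :
    AffineIndependent ℝ (fun i : {x // x ∈ σ} => v i.1) ↔ ¬Collinear ℝ (v '' ↑σ) := by
  have hrange : Set.range (fun i : {x // x ∈ σ} => v i.1) = v '' ↑σ := by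
    ext; simp
  have : FiniteDimensional ℝ (vectorSpan ℝ (v '' ↑σ)) :=
    finiteDimensional_vectorSpan_of_finite ℝ (σ.finite_toSet.image v)
  rw [affineIndependent_iff_le_finrank_vectorSpan ℝ _ (n := 2) (by simp [hσ]), hrange,
    collinear_iff_finrank_le_one, not_le]
  rfl

theorem isTriangle_iff_orient_ne_zero [DecidableEq ι] {v : ι → ℝ × ℝ} {a b c : ι} :
    IsTriangle v {a, b, c} ↔ orient (v a) (v b) (v c) ≠ 0 := by
  have himage : v '' ↑({a, b, c} : Finset ι) = {v a, v b, v c} := by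
    simp [Set.image_insert_eq]
  rw [Ne, orient_eq_zero_iff_collinear, ← himage]
  refine ⟨fun h => (affineIndependent_iff_not_collinear_of_card_eq_three h.1).1 h.2, fun h => ?_⟩
  have hcard : ({a, b, c} : Finset ι).card = 3 := by
    rw [himage] at h
    refine Finset.card_eq_three.2 ⟨a, b, c, ?_, ?_, ?_, rfl⟩ <;> rintro rfl <;>
      simp [collinear_pair, Set.pair_comm] at h
  exact ⟨hcard, (affineIndependent_iff_not_collinear_of_card_eq_three hcard).2 h⟩

theorem IsTriangle.interior_nonempty {v : ι → ℝ × ℝ} {σ : Finset ι} (hσ : IsTriangle v σ) :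
    (interior (vertexHull v σ)).Nonempty := by
  rw [vertexHull, interior_convexHull_nonempty_iff_affineSpan_eq_top]
  have himage : Set.range (fun i : {x // x ∈ σ} => v i.1) = v '' ↑σ := by
    ext; simp
  rw [← himage, hσ.2.affineSpan_eq_top_iff_card_eq_finrank_add_one]
  simp [hσ.1]

end Triangle

section Triple

variable {ι : Type*} [LinearOrder ι] {σ : Finset ι} {i j k : ι}

theorem exists_lt_lt_of_card_eq_three (hσ : σ.card = 3) :
    ∃ a b c, a < b ∧ b < c ∧ σ = {a, b, c} := by
  let f := σ.orderEmbOfFin hσ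
  refine ⟨f 0, f 1, f 2, f.strictMono (by decide), f.strictMono (by decide), ?_⟩
  rw [← Finset.image_orderEmbOfFin_univ σ hσ, show (Finset.univ : Finset (Fin 3)) = {0, 1, 2}
    from rfl, Finset.image_insert, Finset.image_insert, Finset.image_singleton]

variable [LocallyFiniteOrder ι]

theorem exists_eq_of_subset_Icc_of_card_eq_three (hσ : σ.card = 3) (hσij : σ ⊆ Finset.Icc i j)
    (hi : i ∈ σ) (hj : j ∈ σ) : ∃ k, i < k ∧ k < j ∧ σ = {i, k, j} := by
  obtain ⟨a, b, c, hab, hbc, rfl⟩ := exists_lt_lt_of_card_eq_three hσ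
  have hia := (Finset.mem_Icc.1 (hσij (show a ∈ _ by simp))).1
  have hcj := (Finset.mem_Icc.1 (hσij (show c ∈ _ by simp))).2
  simp only [Finset.mem_insert, Finset.mem_singleton] at hi hj
  obtain rfl : a = i := by grind
  obtain rfl : c = j := by grind
  exact ⟨b, hab, hbc, rfl⟩

theorem eq_of_subset_Icc_of_covBy (hσ : 3 ≤ σ.card) (hσij : σ ⊆ Finset.Icc i j) (hik : i ⋖ k)
    (hkj : k ⋖ j) : σ = {i, k, j} := by
  have hsub : σ ⊆ {i, k, j} := fun l hl => by
    obtain ⟨hil, hlj⟩ := Finset.mem_Icc.1 (hσij hl)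
    rcases le_or_gt l k with hlk | hkl
    · rcases hik.eq_or_eq hil hlk with rfl | rfl <;> simp
    · rcases hkj.eq_or_eq hkl.le hlj with rfl | rfl <;> simp
  exact Finset.eq_of_subset_of_card_le hsub (Finset.card_le_three.trans hσ)

theorem not_covBy_of_subset_Icc (hσ : 2 < σ.card) (hσij : σ ⊆ Finset.Icc i j) : ¬i ⋖ j := by
  intro hij
  have hsub : σ ⊆ {i, j} := fun l hl => by
    obtain ⟨hil, hlj⟩ := Finset.mem_Icc.1 (hσij hl)
    rcases hij.eq_or_eq hil hlj with rfl | rfl <;> simp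
  exact hσ.not_ge ((Finset.card_le_card hsub).trans Finset.card_le_two)

theorem not_subset_Icc_of_one_lt_card (hσ : 1 < σ.card) (hik : σ ⊆ Finset.Icc i k) :
    ¬σ ⊆ Finset.Icc k j := by
  intro hkj
  have hk : ∀ l ∈ σ, l = k := fun l hl =>
    (Finset.mem_Icc.1 (hik hl)).2.antisymm (Finset.mem_Icc.1 (hkj hl)).1
  obtain ⟨a, ha, b, hb, hab⟩ := Finset.one_lt_card.1 hσ
  exact hab ((hk a ha).trans (hk b hb).symm)

end Triple

/-! ### Weakly convex configurations -/

/-- A configuration of distinct points is weakly convex if each point is a vertex of the convex hull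
or lies in the relative interior of an edge, and no edge carries two points in its relative
interior. Edges are encoded as nondegenerate extreme segments. -/
structure IsWeaklyConvex {E ι : Type*} [AddCommGroup E] [Module ℝ E] (v : ι → E) : Prop where
  injective : Function.Injective v
  mem_extremePoints_or_mem_edge (i : ι) : v i ∈ (convexHull ℝ (Set.range v)).extremePoints ℝ ∨
    ∃ x y, x ≠ y ∧ IsExtreme ℝ (convexHull ℝ (Set.range v)) (segment ℝ x y) ∧
      v i ∈ openSegment ℝ x y
  edge_subsingleton (x y : E) : x ≠ y →
    IsExtreme ℝ (convexHull ℝ (Set.range v)) (segment ℝ x y) →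
    (Set.range v ∩ openSegment ℝ x y).Subsingleton

namespace IsWeaklyConvex

variable {E ι : Type*} [AddCommGroup E] [Module ℝ E] {v : ι → E} {a b c d : ι}

theorem of_forall_mem_extremePoints (hinj : Function.Injective v)
    (hext : ∀ i, v i ∈ (convexHull ℝ (Set.range v)).extremePoints ℝ) : IsWeaklyConvex v where
  injective := hinj
  mem_extremePoints_or_mem_edge i := .inl (hext i)
  edge_subsingleton x y hxy hedge := by
    rintro _ ⟨⟨i, rfl⟩, hi⟩
    have hx := hedge.subset (left_mem_segment ℝ x y)
    have hy := hedge.subset (right_mem_segment ℝ x y)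
    have hix := (mem_extremePoints.1 (hext i)).2 x hx y hy hi
    exact absurd (hix.1.trans hix.2.symm) hxy

theorem exists_edge (h : IsWeaklyConvex v)
    (ha : v a ∉ (convexHull ℝ (Set.range v)).extremePoints ℝ) :
    ∃ b c, IsExtreme ℝ (convexHull ℝ (Set.range v)) (segment ℝ (v b) (v c)) ∧
      v a ∈ openSegment ℝ (v b) (v c) ∧ v b ≠ v c := by
  obtain ⟨x, y, hxy, hedge, hmem⟩ := (h.mem_extremePoints_or_mem_edge a).resolve_left ha
  obtain ⟨b, rfl⟩ :=
    extremePoints_convexHull_subset (left_mem_extremePoints_of_isExtreme_segment hedge)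
  obtain ⟨c, rfl⟩ :=
    extremePoints_convexHull_subset (right_mem_extremePoints_of_isExtreme_segment hedge)
  exact ⟨b, c, hedge, hmem, hxy⟩

theorem eq_or_eq_or_eq_of_mem_edge (h : IsWeaklyConvex v)
    (hedge : IsExtreme ℝ (convexHull ℝ (Set.range v)) (segment ℝ (v b) (v c)))
    (ha : v a ∈ openSegment ℝ (v b) (v c)) (hbc : v b ≠ v c)
    (hd : v d ∈ segment ℝ (v b) (v c)) : d = a ∨ d = b ∨ d = c := by
  rw [← insert_endpoints_openSegment] at hd
  rcases hd with hd | hd | hd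
  · exact .inr (.inl (h.injective hd))
  · exact .inr (.inr (h.injective hd))
  · exact .inl (h.injective (h.edge_subsingleton _ _ hbc hedge ⟨⟨d, rfl⟩, hd⟩ ⟨⟨a, rfl⟩, ha⟩))

theorem exists_edge_of_mem_vertexHull (h : IsWeaklyConvex v) {τ : Finset ι}
    (ha : v a ∈ vertexHull v τ) (haτ : a ∉ τ) :
    ∃ b ∈ τ, ∃ c ∈ τ, IsExtreme ℝ (convexHull ℝ (Set.range v)) (segment ℝ (v b) (v c)) ∧
      v a ∈ openSegment ℝ (v b) (v c) ∧ v b ≠ v c := by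
  classical
  have hface {B : Set E} (hB : IsExtreme ℝ (convexHull ℝ (Set.range v)) B) (haB : v a ∈ B) :
      v a ∈ convexHull ℝ (v '' τ ∩ B) :=
    inter_convexHull_subset_of_isExtreme (convex_convexHull ℝ _) hB
      ((Set.image_subset_range _ _).trans (subset_convexHull ℝ _)) ⟨haB, ha⟩
  obtain ⟨b, c, hedge, hmem, hbc⟩ := h.exists_edge fun hext => by
    obtain ⟨_, ⟨i, hi, rfl⟩, hia⟩ :=
      convexHull_nonempty_iff.1 ⟨_, hface (isExtreme_singleton.2 hext) rfl⟩
    exact haτ (h.injective hia ▸ hi)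
  have hab : v a ≠ v b := fun hab => hbc (left_mem_openSegment_iff (𝕜 := ℝ) |>.1 (hab ▸ hmem))
  have hac : v a ≠ v c := fun hac => hbc (right_mem_openSegment_iff (𝕜 := ℝ) |>.1 (hac ▸ hmem))
  have hmem' : v a ∈ vertexHull v (τ ∩ {b, c}) := by
    refine convexHull_mono ?_ (hface hedge (openSegment_subset_segment ℝ _ _ hmem))
    rintro _ ⟨⟨i, hi, rfl⟩, hiseg⟩
    refine ⟨i, Finset.mem_inter.2 ⟨hi, ?_⟩, rfl⟩
    rcases h.eq_or_eq_or_eq_of_mem_edge hedge hmem hbc hiseg with rfl | rfl | rfl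
    · exact absurd hi haτ
    · simp
    · simp
  have hpair {i j : ι} (hsub : ({b, c} : Finset ι) ⊆ {i, j}) (haj : v a ≠ v j) : i ∈ τ := by
    by_contra hi
    have hsingle : τ ∩ {b, c} ⊆ {j} := fun k hk => by
      have := hsub (Finset.mem_inter.1 hk).2
      grind
    exact haj (by simpa [vertexHull] using vertexHull_mono hsingle hmem')
  exact ⟨b, hpair subset_rfl hac, c, hpair (Finset.pair_comm b c).subset hab, hedge, hmem, hbc⟩

theorem isExtreme_segment (h : IsWeaklyConvex v) (ha : v a ∈ openSegment ℝ (v b) (v c))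
    (hbc : b ≠ c) : IsExtreme ℝ (convexHull ℝ (Set.range v)) (segment ℝ (v b) (v c)) := by
  classical
  have hbc' := h.injective.ne hbc
  have haτ : a ∉ ({b, c} : Finset ι) := by
    simp only [Finset.mem_insert, Finset.mem_singleton]
    rintro (rfl | rfl)
    · exact hbc' (left_mem_openSegment_iff.1 ha)
    · exact hbc' (right_mem_openSegment_iff.1 ha)
  obtain ⟨i, hi, j, hj, hedge, -, hij⟩ := h.exists_edge_of_mem_vertexHull
    (τ := {b, c}) (vertexHull_pair v b c ▸ openSegment_subset_segment ℝ _ _ ha) haτ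
  simp only [Finset.mem_insert, Finset.mem_singleton] at hi hj
  obtain ⟨rfl | rfl, rfl | rfl⟩ := And.intro hi hj
  · exact absurd rfl hij
  · exact hedge
  · rw [segment_symm]
    exact hedge
  · exact absurd rfl hij

theorem mem_openSegment (h : IsWeaklyConvex v) (hab : a ≠ b) (hac : a ≠ c)
    (ha : v a ∈ segment ℝ (v b) (v c)) : v a ∈ openSegment ℝ (v b) (v c) :=
  mem_openSegment_of_ne_left_right (h.injective.ne hab.symm) (h.injective.ne hac.symm) ha

theorem notMem_extremePoints (h : IsWeaklyConvex v) (hab : a ≠ b) (hac : a ≠ c)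
    (ha : v a ∈ segment ℝ (v b) (v c)) : v a ∉ (convexHull ℝ (Set.range v)).extremePoints ℝ := by
  intro hext
  have hbc := (mem_extremePoints.1 hext).2 _ (subset_convexHull ℝ _ ⟨b, rfl⟩) _
    (subset_convexHull ℝ _ ⟨c, rfl⟩) (h.mem_openSegment hab hac ha)
  exact hab (h.injective hbc.1).symm

theorem not_collinear_of_mem_extremePoints (h : IsWeaklyConvex v) (hab : a ≠ b)
    (hac : a ≠ c) (hbc : b ≠ c)
    (ha : v a ∈ (convexHull ℝ (Set.range v)).extremePoints ℝ)
    (hb : v b ∈ (convexHull ℝ (Set.range v)).extremePoints ℝ)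
    (hc : v c ∈ (convexHull ℝ (Set.range v)).extremePoints ℝ) :
    ¬Collinear ℝ {v a, v b, v c} := fun hcol => by
  rcases hcol.wbtw_or_wbtw_or_wbtw with hw | hw | hw
  · exact h.notMem_extremePoints hab.symm hbc (mem_segment_iff_wbtw.2 hw) hb
  · exact h.notMem_extremePoints hbc.symm hac.symm (mem_segment_iff_wbtw.2 hw) hc
  · exact h.notMem_extremePoints hac hab (mem_segment_iff_wbtw.2 hw) ha

theorem not_collinear (h : IsWeaklyConvex v) (hab : a ≠ b) (hac : a ≠ c) (had : a ≠ d)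
    (hbc : b ≠ c) (hbd : b ≠ d) (hcd : c ≠ d) : ¬Collinear ℝ {v a, v b, v c, v d} := by
  intro hcol
  have key {i j k : ι} (hij : i ≠ j) (hjk : j ≠ k) (hik : i ≠ k) (hdi : d ≠ i) (hdj : d ≠ j)
      (hdk : d ≠ k) (hsub : {v i, v k, v d} ⊆ ({v a, v b, v c, v d} : Set E))
      (hb : Wbtw ℝ (v i) (v j) (v k)) : False := by
    have hj := h.mem_openSegment hij.symm hjk (mem_segment_iff_wbtw.2 hb)
    have hedge := h.isExtreme_segment hj hik
    have hd := mem_segment_of_isExtreme_of_collinear hedge (h.injective.ne hik)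
      (subset_convexHull ℝ _ ⟨d, rfl⟩) (hcol.subset hsub)
    rcases h.eq_or_eq_or_eq_of_mem_edge hedge hj (h.injective.ne hik) hd with h | h | h <;>
      contradiction
  have hsub : ({v a, v b, v c} : Set E) ⊆ {v a, v b, v c, v d} := by
    grind
  rcases (hcol.subset hsub).wbtw_or_wbtw_or_wbtw with hb | hb | hb
  · exact key hab hbc hac had.symm hbd.symm hcd.symm (by grind) hb
  · exact key hbc hac.symm hab.symm hbd.symm hcd.symm had.symm (by grind) hb
  · exact key hac.symm hab hbc.symm hcd.symm had.symm hbd.symm (by grind) hb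

theorem orient_ne_zero {v : ι → ℝ × ℝ} (h : IsWeaklyConvex v) (hab : a ≠ b) (hac : a ≠ c)
    (had : a ≠ d) (hbc : b ≠ c) (hbd : b ≠ d) (hcd : c ≠ d)
    (habc : orient (v a) (v b) (v c) = 0) : orient (v a) (v b) (v d) ≠ 0 := fun habd =>
  h.not_collinear hab hac had hbc hbd hcd
    (collinear_of_orient_eq_zero (h.injective.ne hab) habc habd)

theorem meetInCommonFace_of_isExtreme [DecidableEq ι] (h : IsWeaklyConvex v) {σ τ : Finset ι}
    (hσ : IsTriangle v σ)
    (hσext : IsExtreme ℝ (vertexHull v σ) (vertexHull v σ ∩ vertexHull v τ))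
    (hτext : IsExtreme ℝ (vertexHull v τ) (vertexHull v σ ∩ vertexHull v τ)) :
    MeetInCommonFace v σ τ := by
  refine _root_.meetInCommonFace_of_isExtreme hσext fun a haσ haτ => ?_
  by_contra ha
  obtain ⟨b, hb, c, hc, -, hmem, hbc⟩ := h.exists_edge_of_mem_vertexHull haτ ha
  have hbσ := hτext.left_mem_of_mem_openSegment (mem_vertexHull hb) (mem_vertexHull hc)
    ⟨mem_vertexHull haσ, haτ⟩ hmem
  have hcσ := hτext.right_mem_of_mem_openSegment (mem_vertexHull hb) (mem_vertexHull hc)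
    ⟨mem_vertexHull haσ, haτ⟩ hmem
  have hvertex : v a ∈ (vertexHull v σ).extremePoints ℝ := by
    simpa [vertexHull] using isExtreme_vertexHull_of_affineIndependent hσ.2
      (Finset.singleton_subset_iff.2 haσ)
  have habc := (mem_extremePoints.1 hvertex).2 _ hbσ.1 _ hcσ.1 hmem
  exact hbc (habc.1.trans habc.2.symm)

theorem mem_of_mem_openSegment (h : IsWeaklyConvex v) (hab : a ≠ b) (hac : a ≠ c)
    (ha : v a ∈ openSegment ℝ (v b) (v c)) {σ : Finset ι} (haσ : v a ∈ vertexHull v σ)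
    (ha' : a ∉ σ) : b ∈ σ ∧ c ∈ σ := by
  obtain ⟨d, hd, e, he, hedge, hmem, hde⟩ := h.exists_edge_of_mem_vertexHull haσ ha'
  have hendpoint {i : ι} (hai : a ≠ i) (hi : v i ∈ segment ℝ (v d) (v e)) : i ∈ σ := by
    rcases h.eq_or_eq_or_eq_of_mem_edge hedge hmem hde hi with rfl | rfl | rfl
    · exact absurd rfl hai
    · exact hd
    · exact he
  have hrange (i : ι) : v i ∈ convexHull ℝ (Set.range v) := subset_convexHull ℝ _ ⟨i, rfl⟩
  have hedge_mem := openSegment_subset_segment ℝ _ _ hmem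
  exact ⟨hendpoint hab (hedge.left_mem_of_mem_openSegment (hrange b) (hrange c) hedge_mem ha),
    hendpoint hac (hedge.right_mem_of_mem_openSegment (hrange b) (hrange c) hedge_mem ha)⟩

end IsWeaklyConvex

/-! ### Cyclically ordered configurations -/

/-- A weakly convex configuration listed counterclockwise along the boundary of its convex hull. The
list may start at a point in the interior of an edge but has to end at a vertex, so that the only
edge which can wrap around has the first point in its interior. -/
structure IsCyclicallyOrdered {ι : Type*} [LinearOrder ι] (v : ι → ℝ × ℝ) : Prop
    extends IsWeaklyConvex v where
  orient_nonneg {a b c : ι} : a < b → b < c → 0 ≤ orient (v a) (v b) (v c)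
  mem_extremePoints_of_isMax {c : ι} : IsMax c →
    v c ∈ (convexHull ℝ (Set.range v)).extremePoints ℝ

theorem eq_right_of_mem_segment_of_eq_zero {E : Type*} [AddCommGroup E] [Module ℝ E]
    (f : E →ᵃ[ℝ] ℝ) {x y p q z : E} (hfx : f x ≠ 0) (hfy : f y = 0) (hfp : f p = 0) (hfq : f q = 0)
    (hxy : z ∈ segment ℝ x y) (hpq : z ∈ segment ℝ p q) : z = y := by
  have hfz : f z = 0 := by
    obtain ⟨a, b, -, -, hab, rfl⟩ := hpq
    simp [Convex.combo_affine_apply hab, hfp, hfq]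
  obtain ⟨a, b, -, -, hab, rfl⟩ := hxy
  have ha : a = 0 := by simpa [Convex.combo_affine_apply hab, hfx, hfy] using hfz
  have hb : b = 1 := by linarith
  simp [ha, hb]

namespace IsCyclicallyOrdered

variable {ι : Type*} [LinearOrder ι] {v : ι → ℝ × ℝ} {a b c d i j k l : ι}

theorem orient_nonneg_of_le (h : IsCyclicallyOrdered v) (hab : a ≤ b) (hbc : b ≤ c) :
    0 ≤ orient (v a) (v b) (v c) := by
  rcases hab.eq_or_lt with rfl | hab
  · simp [orient_apply]
  rcases hbc.eq_or_lt with rfl | hbc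
  · simp
  exact h.orient_nonneg hab hbc

theorem exists_mem_diagonals (h : IsCyclicallyOrdered v) (hab : a ≤ b) (hbc : b ≤ c) (hcd : c ≤ d) :
    ∃ o, o ∈ segment ℝ (v a) (v c) ∧ o ∈ segment ℝ (v b) (v d) := by
  rcases hab.eq_or_lt with rfl | hab
  · exact ⟨v a, left_mem_segment ℝ _ _, left_mem_segment ℝ _ _⟩
  rcases hbc.eq_or_lt with rfl | hbc
  · exact ⟨v b, right_mem_segment ℝ _ _, left_mem_segment ℝ _ _⟩
  rcases hcd.eq_or_lt with rfl | hcd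
  · exact ⟨v c, right_mem_segment ℝ _ _, right_mem_segment ℝ _ _⟩
  have habc := h.orient_nonneg hab hbc
  have habd := h.orient_nonneg hab (hbc.trans hcd)
  have hacd := h.orient_nonneg (hab.trans hbc) hcd
  have hbcd := h.orient_nonneg hbc hcd
  have hsum := orient_add_orient (v a) (v b) (v c) (v d)
  have hpos : 0 < orient (v b) (v c) (v d) + orient (v a) (v b) (v d) := by
    refine (add_nonneg hbcd habd).lt_of_ne' fun hzero => ?_
    refine h.orient_ne_zero (a := b) (b := d) (c := c) (d := a) (hbc.trans hcd).ne hbc.ne hab.ne'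
      hcd.ne' (hab.trans (hbc.trans hcd)).ne' (hab.trans hbc).ne' ?_ ?_
    · rw [orient_swap_right]; linarith
    · rw [orient_rotate]; linarith
  refine ⟨(orient (v b) (v c) (v d) + orient (v a) (v b) (v d))⁻¹ •
    (orient (v b) (v c) (v d) • v a + orient (v a) (v b) (v d) • v c), ?_, ?_⟩
  · refine ⟨_, _, div_nonneg hbcd hpos.le, div_nonneg habd hpos.le, ?_, ?_⟩
    · rw [← add_div, div_self hpos.ne']
    · simp only [smul_add, smul_smul, div_eq_inv_mul]
  · rw [orient_smul_eq]
    refine ⟨_, _, div_nonneg hacd hpos.le, div_nonneg habc hpos.le, ?_, ?_⟩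
    · rw [← add_div, div_eq_one_iff_eq hpos.ne']
      linarith
    · simp only [smul_add, smul_smul, div_eq_inv_mul]

theorem mem_segment_of_orient_eq_zero (h : IsCyclicallyOrdered v) (hab : a < b) (hbc : b < c)
    (hflat : orient (v a) (v b) (v c) = 0) (hends : ¬(IsMin a ∧ IsMax c)) :
    v b ∈ segment ℝ (v a) (v c) := by
  rw [not_and_or, not_isMin_iff, not_isMax_iff] at hends
  rcases hends with ⟨e, hea⟩ | ⟨e, hce⟩
  · obtain ⟨o, hoeb, hoac⟩ := h.exists_mem_diagonals hea.le hab.le hbc.le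
    have he := h.orient_ne_zero hab.ne (hab.trans hbc).ne hea.ne' hbc.ne (hea.trans hab).ne'
      (hea.trans (hab.trans hbc)).ne' hflat
    rwa [← eq_right_of_mem_segment_of_eq_zero (orient (v a) (v b)) he (orient_self_right _ _)
      (orient_self_left _ _) hflat hoeb hoac]
  · obtain ⟨o, hoac, hobe⟩ := h.exists_mem_diagonals hab.le hbc.le hce.le
    have he := h.orient_ne_zero hab.ne (hab.trans hbc).ne (hab.trans (hbc.trans hce)).ne hbc.ne
      (hbc.trans hce).ne hce.ne hflat
    rwa [← eq_right_of_mem_segment_of_eq_zero (orient (v a) (v b)) he (orient_self_right _ _)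
      (orient_self_left _ _) hflat (segment_symm ℝ (v b) (v e) ▸ hobe) hoac]

theorem left_covBy_of_orient_eq_zero (h : IsCyclicallyOrdered v) (hab : a < b) (hbc : b < c)
    (hflat : orient (v a) (v b) (v c) = 0) : a ⋖ b := by
  refine ⟨hab, fun d had hdb => ?_⟩
  obtain ⟨o, hoab, hodc⟩ := h.exists_mem_diagonals had.le hdb.le hbc.le
  have hd := h.orient_ne_zero hab.ne (hab.trans hbc).ne had.ne hbc.ne hdb.ne' (hdb.trans hbc).ne'
    hflat
  have hoc := eq_right_of_mem_segment_of_eq_zero (orient (v a) (v b)) hd hflat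
    (orient_self_left _ _) (orient_self_right _ _) hodc hoab
  subst hoc
  have hmax : ¬IsMax c := fun hmax => h.notMem_extremePoints (hab.trans hbc).ne' hbc.ne' hoab
    (h.mem_extremePoints_of_isMax hmax)
  have hb := h.mem_segment_of_orient_eq_zero hab hbc hflat fun hends => hmax hends.2
  exact hbc.ne (h.injective ((mem_segment_iff_wbtw.1 hoab).swap_right_iff.1
    (mem_segment_iff_wbtw.1 hb)).symm)

theorem right_covBy_of_orient_eq_zero (h : IsCyclicallyOrdered v) (hab : a < b) (hbc : b < c)
    (hflat : orient (v a) (v b) (v c) = 0) (hends : ¬(IsMin a ∧ IsMax c)) : b ⋖ c := by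
  refine ⟨hbc, fun d hbd hdc => ?_⟩
  obtain ⟨o, hoad, hobc⟩ := h.exists_mem_diagonals hab.le hbd.le hdc.le
  have hd := h.orient_ne_zero hab.ne (hab.trans hbc).ne (hab.trans hbd).ne hbc.ne hbd.ne hdc.ne'
    hflat
  have hoa := eq_right_of_mem_segment_of_eq_zero (orient (v a) (v b)) hd (orient_self_left _ _)
    (orient_self_right _ _) hflat (segment_symm ℝ (v a) (v d) ▸ hoad) hobc
  subst hoa
  have hb := h.mem_segment_of_orient_eq_zero hab hbc hflat hends
  exact hab.ne (h.injective ((mem_segment_iff_wbtw.1 hobc).swap_left_iff.1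
    (mem_segment_iff_wbtw.1 hb)).symm)

theorem left_mem_segment_of_orient_eq_zero (h : IsCyclicallyOrdered v) (hil : i < l) (hlj : l < j)
    (hflat : orient (v i) (v l) (v j) = 0) (hcov : ¬l ⋖ j) : v i ∈ segment ℝ (v l) (v j) := by
  obtain ⟨d, hld, hdj⟩ := (not_covBy_iff hlj).1 hcov
  obtain ⟨o, hoid, holj⟩ := h.exists_mem_diagonals hil.le hld.le hdj.le
  have hd := h.orient_ne_zero hil.ne (hil.trans hlj).ne (hil.trans hld).ne hlj.ne hld.ne hdj.ne'
    hflat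
  rwa [← eq_right_of_mem_segment_of_eq_zero (orient (v i) (v l)) hd (orient_self_left _ _)
    (orient_self_right _ _) hflat (segment_symm ℝ (v i) (v d) ▸ hoid) holj]

theorem vertexHull_quadruple_subset_left (h : IsCyclicallyOrdered v) (hab : a ≤ b) (hbc : b ≤ c)
    (hcd : c ≤ d) :
    vertexHull v {a, b, c, d} ⊆ vertexHull v {a, b, c} ∪ vertexHull v {a, c, d} := by
  obtain ⟨o, hac, hbd⟩ := h.exists_mem_diagonals hab hbc hcd
  exact vertexHull_quadrilateral_subset hac hbd

theorem vertexHull_quadruple_subset_right (h : IsCyclicallyOrdered v) (hab : a ≤ b) (hbc : b ≤ c)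
    (hcd : c ≤ d) :
    vertexHull v {a, b, c, d} ⊆ vertexHull v {a, b, d} ∪ vertexHull v {b, c, d} := by
  obtain ⟨o, hac, hbd⟩ := h.exists_mem_diagonals hab hbc hcd
  have hunion := vertexHull_quadrilateral_subset hbd (segment_symm ℝ (v a) (v c) ▸ hac)
  rwa [show ({b, c, d, a} : Finset ι) = {a, b, c, d} by grind,
    show ({b, d, a} : Finset ι) = {a, b, d} by grind, Set.union_comm] at hunion

variable [LocallyFiniteOrder ι]

theorem vertexHull_triple_subset (h : IsCyclicallyOrdered v) (hia : i ≤ a) (hak : a ≤ k)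
    (hkc : k ≤ c) (hcj : c ≤ j) : vertexHull v {a, k, c} ⊆
      vertexHull v (Finset.Icc i k) ∪ vertexHull v {i, k, j} ∪ vertexHull v (Finset.Icc k j) := by
  intro x hx
  rcases h.vertexHull_quadruple_subset_left hia hak hkc
    (vertexHull_mono (Finset.subset_insert i _) hx) with hx | hx
  · exact .inl (.inl (vertexHull_mono (by grind) hx))
  rcases h.vertexHull_quadruple_subset_right (hia.trans hak) hkc hcj
    (vertexHull_mono (by grind) hx) with hx | hx
  · exact .inl (.inr hx)
  · exact .inr (vertexHull_mono (by grind) hx)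

theorem vertexHull_Icc_subset (h : IsCyclicallyOrdered v) (hik : i < k) (hkj : k < j) :
    vertexHull v (Finset.Icc i j) ⊆
      vertexHull v (Finset.Icc i k) ∪ vertexHull v {i, k, j} ∪ vertexHull v (Finset.Icc k j) := by
  intro x hx
  have hcard : 3 ≤ (Finset.Icc i j).card := by
    rw [← Finset.card_eq_three.2 ⟨i, k, j, hik.ne, (hik.trans hkj).ne, hkj.ne, rfl⟩]
    exact Finset.card_le_card (by grind)
  obtain ⟨ρ, hρ, hρcard, hxρ⟩ := exists_mem_vertexHull_card_eq (by simpa using hcard) hx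
  obtain ⟨a, b, c, hab, hbc, rfl⟩ := exists_lt_lt_of_card_eq_three (by simpa using hρcard)
  have hia : i ≤ a := (Finset.mem_Icc.1 (hρ (by simp))).1
  have hcj : c ≤ j := (Finset.mem_Icc.1 (hρ (by simp))).2
  rcases le_total c k with hck | hkc
  · exact .inl (.inl (vertexHull_mono (by grind) hxρ))
  rcases le_total k a with hka | hak
  · exact .inr (vertexHull_mono (by grind) hxρ)
  rcases le_total b k with hbk | hkb
  · rcases h.vertexHull_quadruple_subset_left hab.le hbk hkc
      (vertexHull_mono (by grind) hxρ) with hx | hx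
    · exact .inl (.inl (vertexHull_mono (by grind) hx))
    · exact h.vertexHull_triple_subset hia hak hkc hcj hx
  · rcases h.vertexHull_quadruple_subset_right hak hkb hbc.le
      (vertexHull_mono (by grind) hxρ) with hx | hx
    · exact h.vertexHull_triple_subset hia hak hkc hcj hx
    · exact .inr (vertexHull_mono (by grind) hx)

theorem mem_pair_of_isTriangle (h : IsCyclicallyOrdered v) {σ : Finset ι} (hσ : IsTriangle v σ)
    (hσac : σ ⊆ Finset.Icc a c) (hends : ¬(IsMin a ∧ IsMax c)) {l : ι} (hl : l ∈ σ)
    (hflat : orient (v a) (v c) (v l) = 0) : l ∈ ({a, c} : Finset ι) := by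
  by_contra hlac
  simp only [Finset.mem_insert, Finset.mem_singleton, not_or] at hlac
  obtain ⟨hal, hlc⟩ := Finset.mem_Icc.1 (hσac hl)
  replace hal := hal.lt_of_ne' hlac.1
  replace hlc := hlc.lt_of_ne hlac.2
  rw [orient_swap_right, neg_eq_zero] at hflat
  have hal' := h.left_covBy_of_orient_eq_zero hal hlc hflat
  have hlc' := h.right_covBy_of_orient_eq_zero hal hlc hflat hends
  have hσeq := eq_of_subset_Icc_of_covBy hσ.1.ge hσac hal' hlc'
  exact isTriangle_iff_orient_ne_zero.1 (hσeq ▸ hσ) hflat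

end IsCyclicallyOrdered

/-! ### Triangulations of intervals -/

section Triangulation

variable {ι : Type*}

theorem measure_setOf_eq_zero_of_affineMap {E : Type*} [NormedAddCommGroup E] [NormedSpace ℝ E]
    [MeasurableSpace E] [BorelSpace E] [FiniteDimensional ℝ E] (μ : Measure E) [μ.IsAddHaarMeasure]
    (f : E →ᵃ[ℝ] ℝ) {x : E} (hx : f x ≠ 0) : μ {y | f y = 0} = 0 := by
  have hset : {y | f y = 0} = ((AffineSubspace.mk' (0 : ℝ) ⊥).comap f : Set E) := by
    ext y; simp [AffineSubspace.mem_mk']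
  rw [hset]
  refine Measure.addHaar_affineSubspace μ _ fun htop => hx ?_
  have : x ∈ (AffineSubspace.mk' (0 : ℝ) ⊥).comap f := htop ▸ AffineSubspace.mem_top ℝ E x
  simpa [AffineSubspace.mem_mk'] using this

theorem subset_of_ae_le_of_interior_nonempty {E : Type*} [NormedAddCommGroup E] [NormedSpace ℝ E]
    [MeasurableSpace E] {μ : Measure E} [μ.IsOpenPosMeasure] {C U : Set E} (hC : Convex ℝ C)
    (hCint : (interior C).Nonempty) (hU : IsClosed U) (h : C ≤ᵐ[μ] U) : C ⊆ U := by
  have hnull : μ (interior C \ U) = 0 :=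
    measure_mono_null (Set.sdiff_subset_sdiff_left interior_subset) (ae_le_set.1 h)
  have hint : interior C ⊆ U := Set.sdiff_eq_empty.1
    (((isOpen_interior.sdiff hU).measure_eq_zero_iff μ).1 hnull)
  calc C ⊆ closure C := subset_closure
    _ = closure (interior C) := (hC.closure_interior_eq_closure_of_nonempty_interior hCint).symm
    _ ⊆ U := closure_minimal hint hU

theorem isClosed_biUnion_vertexHull {E : Type*} [NormedAddCommGroup E] [NormedSpace ℝ E]
    (v : ι → E) (T : Finset (Finset ι)) : IsClosed (⋃ σ ∈ T, vertexHull v σ) :=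
  T.finite_toSet.isClosed_biUnion fun σ _ =>
    ((σ.finite_toSet.image v).isCompact_convexHull ℝ).isClosed

theorem volume_vertexHull_eq_zero {v : ι → ℝ × ℝ} {σ : Finset ι} {x y : ℝ × ℝ}
    (hxy : x ≠ y) (hσ : ∀ i ∈ σ, orient x y (v i) = 0) : volume (vertexHull v σ) = 0 := by
  obtain ⟨z, hz⟩ := exists_orient_ne_zero hxy
  refine measure_mono_null (fun w hw => ?_)
    (measure_setOf_eq_zero_of_affineMap volume (orient x y) hz)
  have hpos := nonneg_of_mem_vertexHull (orient x y) (fun i hi => (hσ i hi).ge) hw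
  have hneg := nonneg_of_mem_vertexHull (-orient x y) (fun i hi => by simp [hσ i hi]) hw
  exact le_antisymm (by simpa using hneg) hpos

variable [DecidableEq ι] {v : ι → ℝ × ℝ} {A B : Finset ι} {L R T : Finset (Finset ι)}
  {i j k l : ι}

/-- `T` is a triangulation of the points of `v` indexed by `A`. Covering the hull up to a null set
is the same as covering it, except when the points are collinear: then `∅` is a triangulation. -/
structure IsTriangulationOn (v : ι → ℝ × ℝ) (A : Finset ι) (T : Finset (Finset ι)) : Prop where
  subset : ∀ σ ∈ T, σ ⊆ A
  isTriangle : ∀ σ ∈ T, IsTriangle v σ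
  ae_covers : vertexHull v A ≤ᵐ[volume] ⋃ σ ∈ T, vertexHull v σ
  meetInCommonFace : ∀ σ ∈ T, ∀ τ ∈ T, MeetInCommonFace v σ τ

theorem IsTriangulationOn.filter_subset (hT : IsTriangulationOn v A T) (hB : B ⊆ A)
    (f : ℝ × ℝ →ᵃ[ℝ] ℝ) {x : ℝ × ℝ} (hx : f x ≠ 0) (hfB : ∀ i ∈ B, 0 ≤ f (v i))
    (hfT : ∀ σ ∈ T, σ ⊆ B ∨ ∀ i ∈ σ, f (v i) ≤ 0) : IsTriangulationOn v B (T.filter (· ⊆ B)) where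
  subset σ hσ := (Finset.mem_filter.1 hσ).2
  isTriangle σ hσ := hT.isTriangle σ (Finset.mem_filter.1 hσ).1
  ae_covers := by
    have hnull : ∀ᵐ y, f y ≠ 0 := measure_eq_zero_iff_ae_notMem.1
      (measure_setOf_eq_zero_of_affineMap volume f hx)
    filter_upwards [hT.ae_covers, hnull] with y hcover hy hyB
    obtain ⟨σ, hσ, hyσ⟩ := Set.mem_iUnion₂.1 (hcover (vertexHull_mono hB hyB))
    refine Set.mem_biUnion
      (Finset.mem_filter.2 ⟨hσ, (hfT σ hσ).resolve_right fun hneg => hy ?_⟩) hyσ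
    exact le_antisymm
      (by simpa using nonneg_of_mem_vertexHull (-f) (fun i hi => by simpa using hneg i hi) hyσ)
      (nonneg_of_mem_vertexHull f hfB hyB)
  meetInCommonFace σ hσ τ hτ :=
    hT.meetInCommonFace σ (Finset.mem_filter.1 hσ).1 τ (Finset.mem_filter.1 hτ).1

theorem IsTriangulationOn.covers (hT : IsTriangulationOn v A T) (hTne : T.Nonempty) :
    vertexHull v A ⊆ ⋃ σ ∈ T, vertexHull v σ := by
  obtain ⟨σ, hσ⟩ := hTne
  exact subset_of_ae_le_of_interior_nonempty (convex_convexHull ℝ _)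
    ((hT.isTriangle σ hσ).interior_nonempty.mono
      (interior_mono (vertexHull_mono (hT.subset σ hσ))))
    (isClosed_biUnion_vertexHull v T) hT.ae_covers

theorem IsTriangulationOn.not_isTriangle_of_empty (hA : IsTriangulationOn v A ∅) {σ : Finset ι}
    (hσA : σ ⊆ A) : ¬IsTriangle v σ := fun hσ =>
  hσ.interior_nonempty.ne_empty <| (isOpen_interior.measure_eq_zero_iff volume).1 <|
    measure_mono_null (interior_subset.trans (vertexHull_mono hσA)) <| by
      simpa using ae_le_set.1 hA.ae_covers

theorem IsTriangulationOn.forall_notMem_of_mem_openSegment (hT : IsTriangulationOn v A T)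
    (h : IsWeaklyConvex v) (hil : i ≠ l) (hij : i ≠ j) (hlj : l ≠ j)
    (hi : v i ∈ openSegment ℝ (v l) (v j)) {τ : Finset ι} (hτ : τ ∈ T)
    (hiτ : v i ∈ vertexHull v τ) (hi' : i ∉ τ) : ∀ σ ∈ T, i ∉ σ := by
  intro σ hσ hiσ
  have hmeet := hT.meetInCommonFace σ hσ τ hτ ⟨mem_vertexHull hiσ, hiτ⟩
  obtain ⟨hl, hj⟩ := h.mem_of_mem_openSegment hil hij hi hmeet
    fun hmem => hi' (Finset.mem_inter.1 hmem).2
  have hsub : {i, l, j} ⊆ σ := by grind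
  have hcard : ({i, l, j} : Finset ι).card = 3 :=
    Finset.card_eq_three.2 ⟨i, l, j, hil, hij, hlj, rfl⟩
  have heq := Finset.eq_of_subset_of_card_le hsub ((hT.isTriangle σ hσ).1.trans hcard.symm).le
  refine isTriangle_iff_orient_ne_zero.1 (heq ▸ hT.isTriangle σ hσ) ?_
  rw [← orient_rotate]
  exact orient_eq_zero_of_mem_segment (openSegment_subset_segment ℝ _ _ hi)

/-- The triangulation obtained by placing the triangle `i k j` between triangulations `L` and `R` of
the points before and after `k`. When `i k j` is degenerate there is no triangle to place. -/
noncomputable def splice (v : ι → ℝ × ℝ) (i k j : ι)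
    (L R : Finset (Finset ι)) : Finset (Finset ι) :=
  (if orient (v i) (v k) (v j) = 0 then ∅ else {{i, k, j}}) ∪ (L ∪ R)

theorem mem_splice {σ : Finset ι} : σ ∈ splice v i k j L R ↔
    (orient (v i) (v k) (v j) ≠ 0 ∧ σ = {i, k, j}) ∨ σ ∈ L ∨ σ ∈ R := by
  rw [splice]
  split_ifs with h <;> simp [h]

end Triangulation

namespace IsCyclicallyOrdered

variable {ι : Type*} [LinearOrder ι] {v : ι → ℝ × ℝ} {a b c d i j k l : ι} {σ τ : Finset ι}
  {L R T : Finset (Finset ι)}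

theorem not_meetInCommonFace_of_crossing (h : IsCyclicallyOrdered v) (hσ : IsTriangle v σ)
    (hτ : IsTriangle v τ) (hab : a < b) (hbc : b < c) (hcd : c < d) (ha : a ∈ σ) (hc : c ∈ σ)
    (hb : b ∈ τ) (hd : d ∈ τ) : ¬MeetInCommonFace v σ τ := by
  intro hmeet
  obtain ⟨o, hac, hbd⟩ := h.exists_mem_diagonals hab.le hbc.le hcd.le
  rw [← vertexHull_pair] at hac hbd
  have hedges := hmeet.mono hσ.2 hτ.2 (σ' := {a, c}) (τ' := {b, d}) (by grind) (by grind)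
  have hdisj : ({a, c} : Finset ι) ∩ {b, d} = ∅ := by
    ext l
    simp only [Finset.mem_inter, Finset.mem_insert, Finset.mem_singleton, Finset.notMem_empty]
    grind
  simpa [vertexHull, hdisj] using hedges ⟨hac, hbd⟩

variable [LocallyFiniteOrder ι]

theorem meetInCommonFace_left (h : IsCyclicallyOrdered v) (hik : i < k) (hkj : k < j)
    (hσ : IsTriangle v σ) (hσik : σ ⊆ Finset.Icc i k) (hτ : τ ⊆ insert i (Finset.Icc k j)) :
    MeetInCommonFace v σ τ := by
  refine meetInCommonFace_of_separated (ρ := {i, k}) (orient (v i) (v k)) (fun l hl => ?_)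
    (fun l hl => ?_) (fun l hl => h.mem_pair_of_isTriangle hσ hσik (fun hends => ?_) hl)
    (fun l hl hflat => ?_) (affineIndependent_pair (h.injective.ne hik.ne))
  · obtain ⟨hil, hlk⟩ := Finset.mem_Icc.1 (hσik hl)
    rw [orient_swap_right, neg_nonpos]
    exact h.orient_nonneg_of_le hil hlk
  · rcases Finset.mem_insert.1 (hτ hl) with rfl | hlj
    · simp
    · exact h.orient_nonneg_of_le hik.le (Finset.mem_Icc.1 hlj).1
  · exact hends.2.not_lt hkj
  · rcases Finset.mem_insert.1 (hτ hl) with rfl | hlj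
    · simp
    · rcases (Finset.mem_Icc.1 hlj).1.eq_or_lt with rfl | hkl
      · simp
      · exact absurd (h.left_covBy_of_orient_eq_zero hik hkl hflat)
          (not_covBy_of_subset_Icc (by simp [hσ.1]) hσik)

theorem meetInCommonFace_right (h : IsCyclicallyOrdered v) (hik : i < k) (hkj : k < j)
    (hσ : IsTriangle v σ) (hσkj : σ ⊆ Finset.Icc k j) (hikj : orient (v i) (v k) (v j) ≠ 0) :
    MeetInCommonFace v σ {i, k, j} := by
  refine meetInCommonFace_of_separated (ρ := {k, j}) (orient (v k) (v j)) (fun l hl => ?_)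
    ?_ (fun l hl => h.mem_pair_of_isTriangle hσ hσkj (fun hends => ?_) hl)
    ?_ (affineIndependent_pair (h.injective.ne hkj.ne))
  · obtain ⟨hkl, hlj⟩ := Finset.mem_Icc.1 (hσkj hl)
    rw [orient_swap_right, neg_nonpos]
    exact h.orient_nonneg_of_le hkl hlj
  · simp [orient_rotate (v i), h.orient_nonneg hik hkj]
  · exact hends.1.not_lt hik
  · simp [orient_rotate (v i), hikj]

theorem meetInCommonFace_splice (h : IsCyclicallyOrdered v) (hik : i < k) (hkj : k < j)
    (hL : IsTriangulationOn v (Finset.Icc i k) L) (hR : IsTriangulationOn v (Finset.Icc k j) R)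
    (hσ : σ ∈ splice v i k j L R) (hτ : τ ∈ splice v i k j L R) : MeetInCommonFace v σ τ := by
  have hleft {σ τ : Finset ι} (hσ : σ ∈ L) (hτ : τ ⊆ insert i (Finset.Icc k j)) :
      MeetInCommonFace v σ τ :=
    h.meetInCommonFace_left hik hkj (hL.isTriangle σ hσ) (hL.subset σ hσ) hτ
  have hmid : ({i, k, j} : Finset ι) ⊆ insert i (Finset.Icc k j) := by grind
  have hR' {τ : Finset ι} (hτ : τ ∈ R) : τ ⊆ insert i (Finset.Icc k j) :=
    (hR.subset τ hτ).trans (Finset.subset_insert _ _)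
  have hright {σ : Finset ι} (hσ : σ ∈ R) (hikj : orient (v i) (v k) (v j) ≠ 0) :
      MeetInCommonFace v σ {i, k, j} :=
    h.meetInCommonFace_right hik hkj (hR.isTriangle σ hσ) (hR.subset σ hσ) hikj
  rcases mem_splice.1 hσ with ⟨hikj, rfl⟩ | hσ | hσ <;>
    rcases mem_splice.1 hτ with ⟨hikj', rfl⟩ | hτ | hτ
  · exact .refl v _
  · exact (hleft hτ hmid).symm
  · exact (hright hτ hikj).symm
  · exact hleft hσ hmid
  · exact hL.meetInCommonFace σ hσ τ hτ
  · exact hleft hσ (hR' hτ)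
  · exact hright hσ hikj'
  · exact (hleft hτ (hR' hσ)).symm
  · exact hR.meetInCommonFace σ hσ τ hτ

theorem isTriangulationOn_splice (h : IsCyclicallyOrdered v) (hik : i < k) (hkj : k < j)
    (hL : IsTriangulationOn v (Finset.Icc i k) L) (hR : IsTriangulationOn v (Finset.Icc k j) R) :
    IsTriangulationOn v (Finset.Icc i j) (splice v i k j L R) where
  subset σ hσ := by
    rcases mem_splice.1 hσ with ⟨-, rfl⟩ | hσ | hσ
    · grind
    · exact (hL.subset σ hσ).trans (Finset.Icc_subset_Icc le_rfl hkj.le)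
    · exact (hR.subset σ hσ).trans (Finset.Icc_subset_Icc hik.le le_rfl)
  isTriangle σ hσ := by
    rcases mem_splice.1 hσ with ⟨hikj, rfl⟩ | hσ | hσ
    · exact isTriangle_iff_orient_ne_zero.2 hikj
    · exact hL.isTriangle σ hσ
    · exact hR.isTriangle σ hσ
  ae_covers := by
    have hmid : vertexHull v {i, k, j} ≤ᵐ[volume] ⋃ σ ∈ splice v i k j L R, vertexHull v σ := by
      by_cases hikj : orient (v i) (v k) (v j) = 0
      · have hnull := volume_vertexHull_eq_zero (v := v) (σ := {i, k, j}) (h.injective.ne hik.ne)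
          (by simp [hikj])
        exact ae_le_set.2 (measure_mono_null Set.sdiff_subset hnull)
      · exact (Set.subset_biUnion_of_mem (u := vertexHull v)
          (mem_splice.2 (.inl ⟨hikj, rfl⟩))).eventuallyLE
    filter_upwards [hL.ae_covers, hR.ae_covers, hmid] with x hxL hxR hxM hx
    rcases h.vertexHull_Icc_subset hik hkj hx with (hx | hx) | hx
    · exact Set.biUnion_subset_biUnion_left (fun σ hσ => mem_splice.2 (.inr (.inl hσ))) (hxL hx)
    · exact hxM hx
    · exact Set.biUnion_subset_biUnion_left (fun σ hσ => mem_splice.2 (.inr (.inr hσ))) (hxR hx)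
  meetInCommonFace _ hσ _ hτ := h.meetInCommonFace_splice hik hkj hL hR hσ hτ

theorem eq_or_subset_or_subset_of_meetInCommonFace (h : IsCyclicallyOrdered v) (hik : i < k)
    (hkj : k < j) (hikj : IsTriangle v {i, k, j}) (hσ : IsTriangle v σ)
    (hσij : σ ⊆ Finset.Icc i j) (hmeet : MeetInCommonFace v σ {i, k, j}) :
    σ = {i, k, j} ∨ σ ⊆ Finset.Icc i k ∨ σ ⊆ Finset.Icc k j := by
  have hcross₁ {a b c d : ι} := h.not_meetInCommonFace_of_crossing (a := a) (b := b) (c := c)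
    (d := d) hσ hikj
  have hcross₂ {a b c d : ι} := h.not_meetInCommonFace_of_crossing (a := a) (b := b) (c := c)
    (d := d) hikj hσ
  obtain ⟨a, b, c, hab, hbc, rfl⟩ := exists_lt_lt_of_card_eq_three hσ.1
  have hia := (Finset.mem_Icc.1 (hσij (show a ∈ _ by simp))).1
  have hcj := (Finset.mem_Icc.1 (hσij (show c ∈ _ by simp))).2
  rcases le_or_gt c k with hck | hkc
  · exact .inr (.inl (by grind))
  rcases le_or_gt k a with hka | hak
  · exact .inr (.inr (by grind))
  rcases hia.lt_or_eq with hia | rfl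
  · exact absurd hmeet.symm (hcross₂ hia hak hkc (by simp) (by simp) (by simp) (by simp))
  rcases hcj.lt_or_eq with hcj | rfl
  · exact absurd hmeet (hcross₁ hak hkc hcj (by simp) (by simp) (by simp) (by simp))
  rcases lt_trichotomy b k with hbk | rfl | hkb
  · exact absurd hmeet.symm (hcross₂ hab hbk hkc (by simp) (by simp) (by simp) (by simp))
  · exact .inl rfl
  · exact absurd hmeet (hcross₁ hik hkb hbc (by simp) (by simp) (by simp) (by simp))

theorem exists_midpoint_mem_vertexHull (h : IsCyclicallyOrdered v) (hij : i < j)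
    (hT : IsTriangulationOn v (Finset.Icc i j) T) (hTne : T.Nonempty) : ∃ τ ∈ T,
      midpoint ℝ (v i) (v j) ∈ vertexHull v {l ∈ τ | orient (v i) (v l) (v j) = 0} := by
  have hmid : midpoint ℝ (v i) (v j) ∈ segment ℝ (v i) (v j) := midpoint_mem_segment _ _
  obtain ⟨τ, hτ, hmτ⟩ := Set.mem_iUnion₂.1 (hT.covers hTne (segment_subset_vertexHull
    (Finset.left_mem_Icc.2 hij.le) (Finset.right_mem_Icc.2 hij.le) hmid))
  refine ⟨τ, hτ, mem_vertexHull_of_eq_zero (orient (v j) (v i)) (fun l hl => ?_) (fun l hl h0 =>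
    Finset.mem_filter.2 ⟨hl, orient_rotate (v j) (v i) (v l) ▸ h0⟩) hmτ
    (orient_eq_zero_of_mem_segment (segment_symm ℝ (v i) (v j) ▸ hmid))⟩
  obtain ⟨hil, hlj⟩ := Finset.mem_Icc.1 (hT.subset τ hτ hl)
  exact orient_rotate (v j) (v i) (v l) ▸ h.orient_nonneg_of_le hil hlj

theorem exists_mem_and_mem_of_forall_orient_ne_zero (h : IsCyclicallyOrdered v) (hij : i < j)
    (hT : IsTriangulationOn v (Finset.Icc i j) T) (hTne : T.Nonempty)
    (hne : ∀ l, i < l → l < j → orient (v i) (v l) (v j) ≠ 0) : ∃ τ ∈ T, i ∈ τ ∧ j ∈ τ := by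
  obtain ⟨τ, hτ, hmid⟩ := h.exists_midpoint_mem_vertexHull hij hT hTne
  have hends : ∀ l ∈ τ, orient (v i) (v l) (v j) = 0 → l = i ∨ l = j := fun l hl h0 => by
    obtain ⟨hil, hlj⟩ := Finset.mem_Icc.1 (hT.subset τ hτ hl)
    rcases hil.eq_or_lt with rfl | hil
    · exact .inl rfl
    · exact .inr (hlj.eq_or_lt.resolve_right fun hlj => hne l hil hlj h0)
  refine ⟨τ, hτ, by_contra fun hi => ?_, by_contra fun hj => ?_⟩
  · have := vertexHull_mono (τ := {j}) (fun l hl => by grind) hmid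
    exact hij.ne (h.injective (by simpa [vertexHull] using this))
  · have := vertexHull_mono (τ := {i}) (fun l hl => by grind) hmid
    exact hij.ne (h.injective (by simpa [vertexHull] using this))

theorem exists_mem_and_mem_or_forall_notMem (h : IsCyclicallyOrdered v)
    (hT : IsTriangulationOn v (Finset.Icc i j) T) (hTne : T.Nonempty) (hil : i < l) (hlj : l < j)
    (hflat : orient (v i) (v l) (v j) = 0) :
    (∃ τ ∈ T, i ∈ τ ∧ j ∈ τ) ∨ ∀ σ ∈ T, i ∉ σ := by
  have hij := hil.trans hlj
  have hcov := h.left_covBy_of_orient_eq_zero hil hlj hflat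
  obtain ⟨τ, hτ, hmid⟩ := h.exists_midpoint_mem_vertexHull hij hT hTne
  replace hmid {ρ : Finset ι} (hρ : ∀ m ∈ τ, m = i ∨ m = l ∨ m = j → m ∈ ρ) :
      midpoint ℝ (v i) (v j) ∈ vertexHull v ρ := by
    refine vertexHull_mono (fun m hm => ?_) hmid
    obtain ⟨hm, h0⟩ := Finset.mem_filter.1 hm
    obtain ⟨him, hmj⟩ := Finset.mem_Icc.1 (hT.subset τ hτ hm)
    refine hρ m hm ?_
    rcases him.eq_or_lt with rfl | him
    · exact .inl rfl
    rcases hmj.eq_or_lt with rfl | hmj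
    · exact .inr (.inr rfl)
    exact .inr (.inl ((h.left_covBy_of_orient_eq_zero him hmj h0).unique_right hcov))
  have hi : v i ∈ segment ℝ (v l) (v j) := by
    refine h.left_mem_segment_of_orient_eq_zero hil hlj hflat fun hcov' => ?_
    have hτeq := eq_of_subset_Icc_of_covBy (hT.isTriangle τ hτ).1.ge (hT.subset τ hτ) hcov hcov'
    have hτtri := hT.isTriangle τ hτ
    rw [hτeq, isTriangle_iff_orient_ne_zero] at hτtri
    exact hτtri hflat
  have hbtw : Wbtw ℝ (v l) (v i) (midpoint ℝ (v i) (v j)) :=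
    (mem_segment_iff_wbtw.1 hi).trans_right_left (wbtw_midpoint ℝ _ _)
  by_cases hjτ : j ∈ τ
  · by_cases hiτ : i ∈ τ
    · exact .inl ⟨τ, hτ, hiτ, hjτ⟩
    have hlτ : l ∈ τ := by_contra fun hlτ => by
      have := hmid (ρ := {j}) (by grind)
      exact hij.ne (h.injective (by simpa [vertexHull] using this))
    exact .inr (hT.forall_notMem_of_mem_openSegment h.toIsWeaklyConvex hil.ne hij.ne hlj.ne
      (h.mem_openSegment hil.ne hij.ne hi) hτ (segment_subset_vertexHull hlτ hjτ hi) hiτ)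
  · have := hmid (ρ := {l, i}) (by grind)
    rw [vertexHull_pair, mem_segment_iff_wbtw] at this
    exact absurd (h.injective (by simpa using hbtw.swap_right_iff.1 this)) hij.ne

theorem exists_mem_or_flat (h : IsCyclicallyOrdered v) (hij : i < j) (hcov : ¬i ⋖ j)
    (hT : IsTriangulationOn v (Finset.Icc i j) T) : ∃ k, i < k ∧ k < j ∧
      ({i, k, j} ∈ T ∨ orient (v i) (v k) (v j) = 0 ∧ ∀ σ ∈ T, i ∉ σ) := by
  obtain ⟨m, him, hmj⟩ := (not_covBy_iff hij).1 hcov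
  rcases T.eq_empty_or_nonempty with rfl | hTne
  · refine ⟨m, him, hmj, .inr ⟨by_contra fun hm => ?_, by simp⟩⟩
    exact hT.not_isTriangle_of_empty (by grind) (isTriangle_iff_orient_ne_zero.2 hm)
  have hends : (∃ τ ∈ T, i ∈ τ ∧ j ∈ τ) → ∃ k, i < k ∧ k < j ∧ {i, k, j} ∈ T := by
    rintro ⟨τ, hτ, hi, hj⟩
    obtain ⟨k, hik, hkj, rfl⟩ :=
      exists_eq_of_subset_Icc_of_card_eq_three (hT.isTriangle τ hτ).1 (hT.subset τ hτ) hi hj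
    exact ⟨k, hik, hkj, hτ⟩
  by_cases hflat : ∃ l, i < l ∧ l < j ∧ orient (v i) (v l) (v j) = 0
  · obtain ⟨l, hil, hlj, hl⟩ := hflat
    rcases h.exists_mem_and_mem_or_forall_notMem hT hTne hil hlj hl with hmem | hmem
    · obtain ⟨k, hik, hkj, hk⟩ := hends hmem
      exact ⟨k, hik, hkj, .inl hk⟩
    · exact ⟨l, hil, hlj, .inr ⟨hl, hmem⟩⟩
  · push Not at hflat
    obtain ⟨k, hik, hkj, hk⟩ :=
      hends (h.exists_mem_and_mem_of_forall_orient_ne_zero hij hT hTne hflat)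
    exact ⟨k, hik, hkj, .inl hk⟩

theorem exists_split (h : IsCyclicallyOrdered v) (hij : i < j) (hcov : ¬i ⋖ j)
    (hT : IsTriangulationOn v (Finset.Icc i j) T) : ∃ k, i < k ∧ k < j ∧
      (orient (v i) (v k) (v j) ≠ 0 → {i, k, j} ∈ T) ∧
      ∀ σ ∈ T, σ = {i, k, j} ∨ σ ⊆ Finset.Icc i k ∨ σ ⊆ Finset.Icc k j := by
  obtain ⟨k, hik, hkj, hk | ⟨hflat, hi⟩⟩ := h.exists_mem_or_flat hij hcov hT
  · exact ⟨k, hik, hkj, fun _ => hk, fun σ hσ => h.eq_or_subset_or_subset_of_meetInCommonFace hik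
      hkj (hT.isTriangle _ hk) (hT.isTriangle σ hσ) (hT.subset σ hσ)
      (hT.meetInCommonFace σ hσ _ hk)⟩
  · refine ⟨k, hik, hkj, fun hne => absurd hflat hne, fun σ hσ => .inr (.inr fun l hl => ?_)⟩
    obtain ⟨hil, hlj⟩ := Finset.mem_Icc.1 (hT.subset σ hσ hl)
    have hil' : i < l := hil.lt_of_ne fun hil => hi σ hσ (hil ▸ hl)
    exact Finset.mem_Icc.2 ⟨(h.left_covBy_of_orient_eq_zero hik hkj hflat).ge_of_gt hil', hlj⟩

theorem isTriangulationOn_filter_left (h : IsCyclicallyOrdered v) (hik : i < k) (hkj : k < j)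
    (hT : IsTriangulationOn v (Finset.Icc i j) T)
    (hsplit : ∀ σ ∈ T, σ = {i, k, j} ∨ σ ⊆ Finset.Icc i k ∨ σ ⊆ Finset.Icc k j) :
    IsTriangulationOn v (Finset.Icc i k) (T.filter (· ⊆ Finset.Icc i k)) := by
  obtain ⟨x, hx⟩ := exists_orient_ne_zero (h.injective.ne hik.ne')
  have hneg : ∀ l, k ≤ l → orient (v k) (v i) (v l) ≤ 0 := fun l hkl => by
    rw [orient_swap, neg_nonpos]
    exact h.orient_nonneg_of_le hik.le hkl
  refine hT.filter_subset (Finset.Icc_subset_Icc le_rfl hkj.le) _ hx (fun l hl => ?_) fun σ hσ => ?_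
  · obtain ⟨hil, hlk⟩ := Finset.mem_Icc.1 hl
    exact orient_rotate (v k) (v i) (v l) ▸ h.orient_nonneg_of_le hil hlk
  · rcases hsplit σ hσ with rfl | hσ | hσ
    · simp [hneg j hkj.le]
    · exact .inl hσ
    · exact .inr fun l hl => hneg l (Finset.mem_Icc.1 (hσ hl)).1

theorem isTriangulationOn_filter_right (h : IsCyclicallyOrdered v) (hik : i < k) (hkj : k < j)
    (hT : IsTriangulationOn v (Finset.Icc i j) T)
    (hsplit : ∀ σ ∈ T, σ = {i, k, j} ∨ σ ⊆ Finset.Icc i k ∨ σ ⊆ Finset.Icc k j) :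
    IsTriangulationOn v (Finset.Icc k j) (T.filter (· ⊆ Finset.Icc k j)) := by
  obtain ⟨x, hx⟩ := exists_orient_ne_zero (h.injective.ne hkj.ne')
  have hneg : ∀ l, l ≤ k → orient (v j) (v k) (v l) ≤ 0 := fun l hlk => by
    rw [orient_swap, neg_nonpos, orient_rotate]
    exact h.orient_nonneg_of_le hlk hkj.le
  refine hT.filter_subset (Finset.Icc_subset_Icc hik.le le_rfl) _ hx (fun l hl => ?_) fun σ hσ => ?_
  · obtain ⟨hkl, hlj⟩ := Finset.mem_Icc.1 hl
    exact orient_rotate (v j) (v k) (v l) ▸ h.orient_nonneg_of_le hkl hlj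
  · rcases hsplit σ hσ with rfl | hσ | hσ
    · simp [hneg i hik.le]
    · exact .inr fun l hl => hneg l (Finset.mem_Icc.1 (hσ hl)).2
    · exact .inl hσ

theorem exists_eq_splice (h : IsCyclicallyOrdered v) (hij : i < j) (hcov : ¬i ⋖ j)
    (hT : IsTriangulationOn v (Finset.Icc i j) T) : ∃ k L R, i < k ∧ k < j ∧
      IsTriangulationOn v (Finset.Icc i k) L ∧ IsTriangulationOn v (Finset.Icc k j) R ∧
      T = splice v i k j L R := by
  obtain ⟨k, hik, hkj, hmid, hsplit⟩ := h.exists_split hij hcov hT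
  refine ⟨k, _, _, hik, hkj, h.isTriangulationOn_filter_left hik hkj hT hsplit,
    h.isTriangulationOn_filter_right hik hkj hT hsplit, ?_⟩
  ext σ
  simp only [mem_splice, Finset.mem_filter]
  constructor
  · intro hσ
    refine (hsplit σ hσ).imp (fun hσk => ⟨?_, hσk⟩) (.imp (⟨hσ, ·⟩) (⟨hσ, ·⟩))
    exact isTriangle_iff_orient_ne_zero.1 (hσk ▸ hT.isTriangle σ hσ)
  · rintro (⟨hne, rfl⟩ | hσ | hσ)
    · exact hmid hne
    · exact hσ.1
    · exact hσ.1

theorem eq_of_splice_eq_splice (h : IsCyclicallyOrdered v) {k' : ι} {L' R' : Finset (Finset ι)}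
    (hik : i < k) (hkj : k < j) (hik' : i < k') (hkj' : k' < j)
    (hL : IsTriangulationOn v (Finset.Icc i k) L) (hR : IsTriangulationOn v (Finset.Icc k j) R)
    (hL' : IsTriangulationOn v (Finset.Icc i k') L')
    (hR' : IsTriangulationOn v (Finset.Icc k' j) R')
    (heq : splice v i k j L R = splice v i k' j L' R') : k = k' := by
  have key {k k' : ι} {L R L' R' : Finset (Finset ι)} (hik : i < k) (hkj : k < j) (hik' : i < k')
      (hkj' : k' < j) (hL' : IsTriangulationOn v (Finset.Icc i k') L')
      (hR' : IsTriangulationOn v (Finset.Icc k' j) R')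
      (heq : splice v i k j L R = splice v i k' j L' R')
      (hne : orient (v i) (v k) (v j) ≠ 0) : k = k' := by
    have hmem : {i, k, j} ∈ splice v i k' j L' R' := heq ▸ mem_splice.2 (.inl ⟨hne, rfl⟩)
    rcases mem_splice.1 hmem with ⟨-, heq⟩ | hmem | hmem
    · have hk : k ∈ ({i, k', j} : Finset ι) := heq ▸ by simp
      simpa [hik.ne', hkj.ne] using hk
    · exact absurd (Finset.mem_Icc.1 (hL'.subset _ hmem (show j ∈ _ by simp))).2 hkj'.not_ge
    · exact absurd (Finset.mem_Icc.1 (hR'.subset _ hmem (show i ∈ _ by simp))).1 hik'.not_ge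
  by_cases hk : orient (v i) (v k) (v j) = 0
  · by_cases hk' : orient (v i) (v k') (v j) = 0
    · exact (h.left_covBy_of_orient_eq_zero hik hkj hk).unique_right
        (h.left_covBy_of_orient_eq_zero hik' hkj' hk')
    · exact (key hik' hkj' hik hkj hL hR heq.symm hk').symm
  · exact key hik hkj hik' hkj' hL' hR' heq hk

end IsCyclicallyOrdered

section Triangulation

variable {ι : Type*} [LinearOrder ι] [LocallyFiniteOrder ι] {v : ι → ℝ × ℝ} {i j k : ι}
  {L R : Finset (Finset ι)}

theorem filter_splice_left (hkj : k < j)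
    (hL : IsTriangulationOn v (Finset.Icc i k) L) (hR : IsTriangulationOn v (Finset.Icc k j) R) :
    (splice v i k j L R).filter (· ⊆ Finset.Icc i k) = L := by
  ext σ
  rw [Finset.mem_filter, mem_splice]
  refine ⟨?_, fun hσ => ⟨.inr (.inl hσ), hL.subset σ hσ⟩⟩
  rintro ⟨⟨-, rfl⟩ | hσ | hσ, hsub⟩
  · exact absurd (Finset.mem_Icc.1 (hsub (show j ∈ _ by simp))).2 hkj.not_ge
  · exact hσ
  · exact absurd (hR.subset σ hσ)
      (not_subset_Icc_of_one_lt_card (by simp [(hR.isTriangle σ hσ).1]) hsub)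

theorem filter_splice_right (hik : i < k)
    (hL : IsTriangulationOn v (Finset.Icc i k) L) (hR : IsTriangulationOn v (Finset.Icc k j) R) :
    (splice v i k j L R).filter (· ⊆ Finset.Icc k j) = R := by
  ext σ
  rw [Finset.mem_filter, mem_splice]
  refine ⟨?_, fun hσ => ⟨.inr (.inr hσ), hR.subset σ hσ⟩⟩
  rintro ⟨⟨-, rfl⟩ | hσ | hσ, hsub⟩
  · exact absurd (Finset.mem_Icc.1 (hsub (show i ∈ _ by simp))).1 hik.not_ge
  · exact absurd hsub
      (not_subset_Icc_of_one_lt_card (by simp [(hL.isTriangle σ hσ).1]) (hL.subset σ hσ))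
  · exact hσ

open scoped Classical in
/-- The triangulations of the points of `v` with index between `i` and `j`. -/
noncomputable def triangulations (v : ι → ℝ × ℝ) (i j : ι) : Finset (Finset (Finset ι)) :=
  (Finset.Icc i j).powerset.powerset.filter (IsTriangulationOn v (Finset.Icc i j))

theorem mem_triangulations {T : Finset (Finset ι)} :
    T ∈ triangulations v i j ↔ IsTriangulationOn v (Finset.Icc i j) T := by
  classical
  simp only [triangulations, Finset.mem_filter, Finset.mem_powerset, and_iff_right_iff_imp]
  exact fun hT σ hσ => Finset.mem_powerset.2 (hT.subset σ hσ)

theorem triangulations_of_covBy (hij : i ⋖ j) (hv : v i ≠ v j) : triangulations v i j = {∅} := by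
  ext T
  rw [mem_triangulations, Finset.mem_singleton]
  refine ⟨fun hT => Finset.eq_empty_of_forall_notMem fun σ hσ =>
    not_covBy_of_subset_Icc (by simp [(hT.isTriangle σ hσ).1]) (hT.subset σ hσ) hij, ?_⟩
  rintro rfl
  have hflat : ∀ l ∈ Finset.Icc i j, orient (v i) (v j) (v l) = 0 := fun l hl => by
    obtain ⟨hil, hlj⟩ := Finset.mem_Icc.1 hl
    rcases hij.eq_or_eq hil hlj with rfl | rfl <;> simp
  exact ⟨by simp, by simp, by simp [ae_le_set, volume_vertexHull_eq_zero hv hflat], by simp⟩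

namespace IsCyclicallyOrdered

theorem triangulations_eq_biUnion (h : IsCyclicallyOrdered v) (hij : i < j) (hcov : ¬i ⋖ j) :
    triangulations v i j = (Finset.Ioo i j).biUnion fun k =>
      Finset.image₂ (splice v i k j) (triangulations v i k) (triangulations v k j) := by
  ext T
  simp only [Finset.mem_biUnion, Finset.mem_image₂, mem_triangulations, Finset.mem_Ioo]
  constructor
  · intro hT
    obtain ⟨k, L, R, hik, hkj, hL, hR, rfl⟩ := h.exists_eq_splice hij hcov hT
    exact ⟨k, ⟨hik, hkj⟩, L, hL, R, hR, rfl⟩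
  · rintro ⟨k, ⟨hik, hkj⟩, L, hL, R, hR, rfl⟩
    exact h.isTriangulationOn_splice hik hkj hL hR

theorem card_triangulations_eq_sum (h : IsCyclicallyOrdered v) (hij : i < j) (hcov : ¬i ⋖ j) :
    (triangulations v i j).card =
      ∑ k ∈ Finset.Ioo i j, (triangulations v i k).card * (triangulations v k j).card := by
  rw [h.triangulations_eq_biUnion hij hcov, Finset.card_biUnion]
  · refine Finset.sum_congr rfl fun k hk => Finset.card_image₂_iff.2 ?_
    obtain ⟨hik, hkj⟩ := Finset.mem_Ioo.1 hk
    rintro ⟨L, R⟩ hLR ⟨L', R'⟩ hLR' heq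
    simp only [Set.mem_prod, Finset.mem_coe, mem_triangulations] at hLR hLR' heq
    have hL := filter_splice_left hkj hLR.1 hLR.2
    have hR := filter_splice_right hik hLR.1 hLR.2
    rw [heq] at hL hR
    exact Prod.ext (hL.symm.trans (filter_splice_left hkj hLR'.1 hLR'.2))
      (hR.symm.trans (filter_splice_right hik hLR'.1 hLR'.2))
  · intro k hk k' hk' hne
    obtain ⟨hik, hkj⟩ := Finset.mem_Ioo.1 hk
    obtain ⟨hik', hkj'⟩ := Finset.mem_Ioo.1 hk'
    simp only [Finset.disjoint_left, Finset.mem_image₂, mem_triangulations]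
    rintro _ ⟨L, hL, R, hR, rfl⟩ ⟨L', hL', R', hR', heq⟩
    exact hne (h.eq_of_splice_eq_splice hik hkj hik' hkj' hL hR hL' hR' heq.symm)

end IsCyclicallyOrdered

theorem card_Ioo_add_card_Ioo (hik : i < k) (hkj : k < j) :
    (Finset.Ioo i k).card + (Finset.Ioo k j).card + 1 = (Finset.Ioo i j).card := by
  have hunion : Finset.Ioo i j = insert k (Finset.Ioo i k ∪ Finset.Ioo k j) := by
    ext l
    simp only [Finset.mem_insert, Finset.mem_union, Finset.mem_Ioo]
    grind
  have hdisj : Disjoint (Finset.Ioo i k) (Finset.Ioo k j) :=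
    Finset.disjoint_left.2 fun l hl hl' =>
      (Finset.mem_Ioo.1 hl).2.not_gt (Finset.mem_Ioo.1 hl').1
  rw [hunion, Finset.card_insert_of_notMem (by simp), Finset.card_union_of_disjoint hdisj]

theorem sum_Ioo_eq_sum_antidiagonal {M : Type*} [AddCommMonoid M] (f : ℕ → ℕ → M) {n : ℕ}
    (hn : (Finset.Ioo i j).card = n + 1) :
    ∑ k ∈ Finset.Ioo i j, f (Finset.Ioo i k).card (Finset.Ioo k j).card =
      ∑ p ∈ Finset.HasAntidiagonal.antidiagonal n, f p.1 p.2 := by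
  have hmaps : ∀ k ∈ Finset.Ioo i j,
      ((Finset.Ioo i k).card, (Finset.Ioo k j).card) ∈ Finset.HasAntidiagonal.antidiagonal n := by
    intro k hk
    obtain ⟨hik, hkj⟩ := Finset.mem_Ioo.1 hk
    have := card_Ioo_add_card_Ioo hik hkj
    rw [Finset.HasAntidiagonal.mem_antidiagonal]
    lia
  have hinj : Set.InjOn (fun k => ((Finset.Ioo i k).card, (Finset.Ioo k j).card))
      (Finset.Ioo i j : Finset ι) := by
    refine fun k hk k' hk' heq => ?_
    have hmono : StrictMonoOn (fun k => (Finset.Ioo i k).card) (Finset.Ioo i j : Finset ι) :=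
      fun a ha b _ hab => Finset.card_lt_card <|
        (Finset.ssubset_iff_of_subset (Finset.Ioo_subset_Ioo le_rfl hab.le)).2
          ⟨a, Finset.mem_Ioo.2 ⟨(Finset.mem_Ioo.1 ha).1, hab⟩, by simp⟩
    exact hmono.injOn hk hk' (congrArg Prod.fst heq)
  refine Finset.sum_nbij _ hmaps hinj
    (Finset.surjOn_of_injOn_of_card_le _ hmaps hinj (by simp [hn])) fun _ _ => rfl

theorem IsCyclicallyOrdered.card_triangulations (h : IsCyclicallyOrdered v) (hij : i < j) :
    (triangulations v i j).card = catalan (Finset.Ioo i j).card := by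
  induction hn : (Finset.Ioo i j).card using Nat.strong_induction_on generalizing i j with
  | h n ih =>
    have hcov : i ⋖ j ↔ n = 0 := by
      rw [covBy_iff_Ioo_eq, and_iff_right hij, ← Finset.coe_Ioo, Finset.coe_eq_empty,
        ← Finset.card_eq_zero, hn]
    obtain _ | n := n
    · simp [triangulations_of_covBy (hcov.2 rfl) (h.injective.ne hij.ne)]
    rw [h.card_triangulations_eq_sum hij (by simp [hcov]), catalan_succ',
      ← sum_Ioo_eq_sum_antidiagonal (fun a b => catalan a * catalan b) hn]
    refine Finset.sum_congr rfl fun k hk => ?_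
    obtain ⟨hik, hkj⟩ := Finset.mem_Ioo.1 hk
    have := card_Ioo_add_card_Ioo hik hkj
    rw [ih _ (by lia) hik rfl, ih _ (by lia) hkj rfl]

end Triangulation

/-! ### Sorting a weakly convex configuration by angle -/

section RelativeCoord

/-- The position of `x` relative to `a`, as a complex number whose argument is the angle from the
ray `a y` to the ray `a x`. -/
noncomputable def relativeCoord (a y x : ℝ × ℝ) : ℂ :=
  star (Complex.equivRealProdLm.symm (y - a)) * Complex.equivRealProdLm.symm (x - a)

variable {a y x x' : ℝ × ℝ}

theorem relativeCoord_re (a y x : ℝ × ℝ) :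
    (relativeCoord a y x).re = (y.1 - a.1) * (x.1 - a.1) + (y.2 - a.2) * (x.2 - a.2) := by
  simp only [relativeCoord, Complex.mul_re, Complex.star_def, Complex.conj_re, Complex.conj_im,
    Complex.equivRealProdLm_symm_apply_re, Complex.equivRealProdLm_symm_apply_im, Prod.fst_sub,
    Prod.snd_sub]
  ring

theorem relativeCoord_im (a y x : ℝ × ℝ) : (relativeCoord a y x).im = orient a y x := by
  simp only [relativeCoord, Complex.mul_im, Complex.star_def, Complex.conj_re, Complex.conj_im,
    Complex.equivRealProdLm_symm_apply_re, Complex.equivRealProdLm_symm_apply_im, Prod.fst_sub,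
    Prod.snd_sub, orient_apply]
  ring

theorem sum_sq_sub_mul_orient (a y x x' : ℝ × ℝ) :
    ((y.1 - a.1) ^ 2 + (y.2 - a.2) ^ 2) * orient a x x' =
      ‖relativeCoord a y x‖ * ‖relativeCoord a y x'‖ *
        Real.sin ((relativeCoord a y x').arg - (relativeCoord a y x).arg) :=
  calc
    _ = (relativeCoord a y x).re * (relativeCoord a y x').im -
        (relativeCoord a y x).im * (relativeCoord a y x').re := by
      simp only [relativeCoord_re, relativeCoord_im, orient_apply]
      ring
    _ = _ := by
      rw [← Complex.norm_mul_cos_arg (relativeCoord a y x), ← Complex.norm_mul_sin_arg,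
        ← Complex.norm_mul_cos_arg (relativeCoord a y x'), ← Complex.norm_mul_sin_arg, Real.sin_sub]
      ring

theorem orient_nonneg_of_arg_le (hay : y ≠ a) (hx : 0 ≤ orient a y x)
    (hle : (relativeCoord a y x).arg ≤ (relativeCoord a y x').arg) : 0 ≤ orient a x x' := by
  refine nonneg_of_mul_nonneg_right ((sum_sq_sub_mul_orient a y x x').symm ▸ ?_)
    (sum_sq_sub_pos hay.symm)
  rw [← relativeCoord_im, ← Complex.arg_nonneg_iff] at hx
  exact mul_nonneg (by positivity) (Real.sin_nonneg_of_nonneg_of_le_pi (sub_nonneg.2 hle)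
    (by linarith [Complex.arg_le_pi (relativeCoord a y x')]))

theorem wbtw_or_wbtw_of_arg_eq (hay : y ≠ a)
    (heq : (relativeCoord a y x).arg = (relativeCoord a y x').arg) :
    Wbtw ℝ a x x' ∨ Wbtw ℝ a x' x := by
  have hy : star (Complex.equivRealProdLm.symm (y - a)) ≠ 0 := by
    rwa [star_ne_zero, Ne, LinearEquiv.map_eq_zero_iff, sub_eq_zero]
  let f : ℝ × ℝ →ₗ[ℝ] ℂ := LinearMap.mulLeft ℝ (star (Complex.equivRealProdLm.symm (y - a))) ∘ₗ
    Complex.equivRealProdLm.symm.toLinearMap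
  have hf : Function.Injective f :=
    (mul_right_injective₀ hy).comp Complex.equivRealProdLm.symm.injective
  exact wbtw_total_of_sameRay_vsub_left
    (hf.sameRay_map_iff.1 (Complex.sameRay_iff.2 (.inr (.inr heq))))

theorem arg_relativeCoord_eq_pi (hay : y ≠ a) (ha : a ∈ openSegment ℝ y x) :
    (relativeCoord a y x).arg = Real.pi := by
  rw [Complex.arg_eq_pi_iff, relativeCoord_re, relativeCoord_im]
  refine ⟨?_, ?_⟩
  · obtain ⟨s, t, hs, ht, hst, hcomb⟩ := ha
    have hfst : t * (x.1 - a.1) = -s * (y.1 - a.1) := by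
      simp only [← hcomb, Prod.fst_add, Prod.smul_fst, smul_eq_mul]
      linear_combination (s * y.1 + t * x.1) * -hst
    have hsnd : t * (x.2 - a.2) = -s * (y.2 - a.2) := by
      simp only [← hcomb, Prod.snd_add, Prod.smul_snd, smul_eq_mul]
      linear_combination (s * y.2 + t * x.2) * -hst
    refine neg_of_mul_neg_right (?_ : t * _ < 0) ht.le
    linear_combination (y.1 - a.1) * hfst + (y.2 - a.2) * hsnd + s * sum_sq_sub_pos hay.symm
  · rw [← orient_rotate]
    exact orient_eq_zero_of_mem_segment (openSegment_subset_segment ℝ _ _ ha)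

end RelativeCoord

section Sorting

theorem orient_nonneg_or_orient_nonpos {A : Set (ℝ × ℝ)} (hA : Convex ℝ A) {x y : ℝ × ℝ}
    (hxy : x ≠ y) (hedge : IsExtreme ℝ A (segment ℝ x y)) :
    (∀ u ∈ A, 0 ≤ orient x y u) ∨ ∀ u ∈ A, orient x y u ≤ 0 := by
  by_contra! hsides
  obtain ⟨⟨u, hu, hux⟩, w, hw, hwx⟩ := hsides
  have hzero : (0 : ℝ) ∈ openSegment ℝ (orient x y u) (orient x y w) := by
    rw [openSegment_eq_Ioo (hux.trans hwx)]
    exact ⟨hux, hwx⟩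
  rw [← image_openSegment] at hzero
  obtain ⟨z, hz, hz0⟩ := hzero
  have hzxy := mem_segment_of_isExtreme_of_collinear hedge hxy
    (hA.openSegment_subset hu hw hz) (orient_eq_zero_iff_collinear.1 hz0)
  exact hux.ne (orient_eq_zero_of_mem_segment (hedge.left_mem_of_mem_openSegment hu hw hzxy hz))

variable {ι : Type*} {v : ι → ℝ × ℝ}

theorem mem_vertexHull_of_orient_nonneg [DecidableEq ι] {a b c : ι} {x : ℝ × ℝ}
    (habc : 0 < orient (v a) (v b) (v c)) (hbc : 0 ≤ orient (v b) (v c) x)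
    (hca : 0 ≤ orient (v c) (v a) x) (hab : 0 ≤ orient (v a) (v b) x) :
    x ∈ vertexHull v {a, b, c} := by
  have hcombo := (convex_convexHull ℝ (v '' ↑({a, b, c} : Finset ι))).sum_mem (t := Finset.univ)
    (w := fun l => (orient (v a) (v b) (v c))⁻¹ *
      ![orient (v b) (v c) x, orient (v c) (v a) x, orient (v a) (v b) x] l)
    (z := ![v a, v b, v c])
    (fun l _ => mul_nonneg (inv_nonneg.2 habc.le) (by fin_cases l <;> assumption))
    (by
      rw [← Finset.mul_sum, inv_mul_eq_one₀ habc.ne']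
      simp only [Fin.sum_univ_three, Matrix.cons_val, orient_apply]
      ring)
    (by intro l _; fin_cases l <;> exact mem_vertexHull (by simp))
  convert hcombo
  simp only [Fin.sum_univ_three, mul_smul, ← smul_add]
  rw [eq_inv_smul_iff₀ habc.ne']
  ext <;> simp only [orient_apply, Matrix.cons_val, Prod.fst_add, Prod.snd_add, Prod.smul_fst,
    Prod.smul_snd, smul_eq_mul] <;> ring

/-- The points of `v` other than `v a` can be sorted by angle around `v a`, starting from the
direction of `y`: they lie in the closed half plane to the left of the line from `v a` to `y`, no
two of them on a common ray. If `v` has points which are not vertices, then `v a` is one of them,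
lying between `y` and the vertex of angle `π`. -/
structure IsFanBase (v : ι → ℝ × ℝ) (a : ι) (y : ℝ × ℝ) : Prop where
  ne : y ≠ v a
  orient_nonneg (j : ι) : 0 ≤ orient (v a) y (v j)
  notMem_openSegment (j k : ι) : k ≠ a → v j ∉ openSegment ℝ (v a) (v k)
  exists_mem_extremePoints {c : ι} : v c ∉ (convexHull ℝ (Set.range v)).extremePoints ℝ → ∃ d,
    v d ∈ (convexHull ℝ (Set.range v)).extremePoints ℝ ∧ v a ∈ openSegment ℝ y (v d)

namespace IsWeaklyConvex

theorem comp_equiv {E ι κ : Type*} [AddCommGroup E] [Module ℝ E] {v : ι → E}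
    (h : IsWeaklyConvex v) (e : κ ≃ ι) : IsWeaklyConvex (v ∘ e) where
  injective := h.injective.comp e.injective
  mem_extremePoints_or_mem_edge i := by
    rw [e.surjective.range_comp]
    exact h.mem_extremePoints_or_mem_edge (e i)
  edge_subsingleton := by
    rw [e.surjective.range_comp]
    exact h.edge_subsingleton

theorem exists_supporting_edge (h : IsWeaklyConvex v) {a : ι}
    (ha : v a ∉ (convexHull ℝ (Set.range v)).extremePoints ℝ) :
    ∃ y c, y ≠ v a ∧ (∀ j, 0 ≤ orient (v a) y (v j)) ∧
      v c ∈ (convexHull ℝ (Set.range v)).extremePoints ℝ ∧ v a ∈ openSegment ℝ y (v c) := by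
  obtain ⟨b, c, hedge, hmem, hbc⟩ := h.exists_edge ha
  wlog hneg : ∀ u ∈ convexHull ℝ (Set.range v), orient (v b) (v c) u ≤ 0 generalizing b c
  · have hpos := (orient_nonneg_or_orient_nonpos (convex_convexHull ℝ _) hbc hedge).resolve_right
      hneg
    refine this c b (segment_symm ℝ (v b) (v c) ▸ hedge) (openSegment_symm ℝ (v b) (v c) ▸ hmem)
      hbc.symm fun u hu => ?_
    rw [orient_swap]
    exact neg_nonpos.2 (hpos u hu)
  refine ⟨v b, c, ?_, fun j => ?_, right_mem_extremePoints_of_isExtreme_segment hedge, hmem⟩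
  · intro hba
    exact hbc (left_mem_openSegment_iff (𝕜 := ℝ) |>.1 (hba ▸ hmem))
  · have hj := hneg (v j) (subset_convexHull ℝ _ ⟨j, rfl⟩)
    obtain ⟨s, t, hs, ht, hst, hcomb⟩ := hmem
    have hscale : orient (v a) (v b) (v j) = -t * orient (v b) (v c) (v j) := by
      obtain rfl : s = 1 - t := by linarith
      simp only [orient_apply, ← hcomb, Prod.fst_add, Prod.snd_add, Prod.smul_fst, Prod.smul_snd,
        smul_eq_mul]
      ring
    rw [hscale]
    nlinarith

theorem orient_nonneg_of_fan (h : IsWeaklyConvex v) {a i j k : ι} (hja : j ≠ a) (hji : j ≠ i)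
    (hjk : j ≠ k) (hi : v j ∉ openSegment ℝ (v a) (v i)) (hk : v j ∉ openSegment ℝ (v a) (v k))
    (haij : 0 ≤ orient (v a) (v i) (v j)) (hajk : 0 ≤ orient (v a) (v j) (v k))
    (haik : 0 ≤ orient (v a) (v i) (v k)) : 0 ≤ orient (v i) (v j) (v k) := by
  classical
  by_contra! hneg
  have hmem : v j ∈ vertexHull v {a, i, k} := by
    have hsum := orient_add_orient (v a) (v i) (v j) (v k)
    refine mem_vertexHull_of_orient_nonneg (by linarith) ?_ ?_ haij
    · rw [orient_swap_right]
      exact neg_nonneg.2 hneg.le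
    · rwa [orient_rotate] at hajk
  obtain ⟨b, hb, c, hc, -, hbc, hne⟩ := h.exists_edge_of_mem_vertexHull hmem (by simp [*])
  have hik : v j ∉ openSegment ℝ (v i) (v k) := fun hmem => by
    have := orient_eq_zero_of_mem_segment (openSegment_subset_segment ℝ _ _ hmem)
    rw [orient_swap_right] at this
    linarith
  simp only [Finset.mem_insert, Finset.mem_singleton] at hb hc
  rcases hb with rfl | rfl | rfl <;> rcases hc with rfl | rfl | rfl <;>
    first | exact absurd rfl hne | exact hi hbc | exact hk hbc | exact hik hbc |
      (rw [openSegment_symm] at hbc; first | exact hi hbc | exact hk hbc | exact hik hbc)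

theorem exists_isFanBase [Finite ι] [Nonempty ι] (h : IsWeaklyConvex v) :
    ∃ a y, IsFanBase v a y := by
  by_cases hext : ∀ c, v c ∈ (convexHull ℝ (Set.range v)).extremePoints ℝ
  · obtain ⟨a, ha⟩ := Finite.exists_min fun i => (v i).1
    refine ⟨a, v a - (0, 1), by simp, fun j => ?_, fun j k hka hj => hka (h.injective ?_),
      fun hc => absurd (hext _) hc⟩
    · simpa [orient_apply] using ha j
    · have hends := (mem_extremePoints.1 (hext j)).2 _ (subset_convexHull ℝ _ ⟨a, rfl⟩) _
        (subset_convexHull ℝ _ ⟨k, rfl⟩) hj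
      exact hends.2.trans hends.1.symm
  · push Not at hext
    obtain ⟨a, ha⟩ := hext
    obtain ⟨y, d, hya, hside, hd, hmem⟩ := h.exists_supporting_edge ha
    exact ⟨a, y, hya, hside, fun j k hka hj => ha (left_mem_extremePoints_of_isExtreme_segment
      (h.isExtreme_segment hj hka.symm)), fun _ => ⟨d, hd, hmem⟩⟩

end IsWeaklyConvex

/-- The angle at `v a` from the ray towards `y` to the ray towards `v j`, with the convention that
`a` itself comes before all other indices. -/
noncomputable def fanAngle [DecidableEq ι] (v : ι → ℝ × ℝ) (a : ι) (y : ℝ × ℝ) : ι → ℝ :=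
  Function.update (fun j => (relativeCoord (v a) y (v j)).arg) a (-1)

namespace IsFanBase

variable {a i j k : ι} {y : ℝ × ℝ}

theorem arg_nonneg (hay : IsFanBase v a y) (j : ι) : 0 ≤ (relativeCoord (v a) y (v j)).arg :=
  Complex.arg_nonneg_iff.2 (relativeCoord_im (v a) y _ ▸ hay.orient_nonneg j)

variable [DecidableEq ι]

theorem fanAngle_lt (hay : IsFanBase v a y) (hj : j ≠ a) : fanAngle v a y a < fanAngle v a y j := by
  rw [fanAngle, Function.update_self, Function.update_of_ne hj]
  linarith [hay.arg_nonneg j]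

theorem ne_of_fanAngle_lt (hay : IsFanBase v a y) (hij : fanAngle v a y i < fanAngle v a y j) :
    j ≠ a := by
  rintro rfl
  exact hij.not_gt (hay.fanAngle_lt (ne_of_apply_ne _ hij.ne))

theorem fanAngle_injective (hay : IsFanBase v a y) (h : IsWeaklyConvex v) :
    Function.Injective (fanAngle v a y) := by
  intro j k hjk
  by_contra hne
  have hj : j ≠ a := by
    rintro rfl
    exact (hay.fanAngle_lt (Ne.symm hne)).ne hjk
  have hk : k ≠ a := by
    rintro rfl
    exact (hay.fanAngle_lt hne).ne' hjk
  rw [fanAngle, Function.update_of_ne hj, Function.update_of_ne hk] at hjk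
  rcases wbtw_or_wbtw_of_arg_eq hay.ne hjk with hb | hb
  · exact hay.notMem_openSegment j k hk (h.mem_openSegment hj hne (mem_segment_iff_wbtw.2 hb))
  · exact hay.notMem_openSegment k j hj
      (h.mem_openSegment hk (Ne.symm hne) (mem_segment_iff_wbtw.2 hb))

theorem orient_nonneg_of_fanAngle_lt (hay : IsFanBase v a y) (h : IsWeaklyConvex v)
    (hij : fanAngle v a y i < fanAngle v a y j) (hjk : fanAngle v a y j < fanAngle v a y k) :
    0 ≤ orient (v i) (v j) (v k) := by
  have hj := hay.ne_of_fanAngle_lt hij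
  have hk := hay.ne_of_fanAngle_lt hjk
  have hfan {i j : ι} (hi : i ≠ a) (hj : j ≠ a) (hij : fanAngle v a y i < fanAngle v a y j) :
      0 ≤ orient (v a) (v i) (v j) := by
    rw [fanAngle, Function.update_of_ne hi, Function.update_of_ne hj] at hij
    exact orient_nonneg_of_arg_le hay.ne (hay.orient_nonneg i) hij.le
  rcases eq_or_ne i a with rfl | hi
  · exact hfan hj hk hjk
  exact h.orient_nonneg_of_fan hj (ne_of_apply_ne _ hij.ne') (ne_of_apply_ne _ hjk.ne)
    (hay.notMem_openSegment j i hi) (hay.notMem_openSegment j k hk) (hfan hi hj hij)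
    (hfan hj hk hjk) (hfan hi hk (hij.trans hjk))

theorem mem_extremePoints_of_forall_fanAngle_le (hay : IsFanBase v a y) (h : IsWeaklyConvex v)
    (hk : ∀ j, fanAngle v a y j ≤ fanAngle v a y k) :
    v k ∈ (convexHull ℝ (Set.range v)).extremePoints ℝ := by
  by_contra hkext
  obtain ⟨d, hd, hmem⟩ := hay.exists_mem_extremePoints hkext
  have hda : d ≠ a := by
    rintro rfl
    exact hay.ne (right_mem_openSegment_iff.1 hmem)
  have hka : k ≠ a := by
    rintro rfl
    exact (hk d).not_gt (hay.fanAngle_lt hda)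
  refine hkext (hay.fanAngle_injective h ((hk d).antisymm ?_) ▸ hd)
  rw [fanAngle, Function.update_of_ne hda, Function.update_of_ne hka,
    arg_relativeCoord_eq_pi hay.ne hmem]
  exact Complex.arg_le_pi _

end IsFanBase

theorem IsWeaklyConvex.exists_isCyclicallyOrdered {m : ℕ} {v : Fin (m + 1) → ℝ × ℝ}
    (h : IsWeaklyConvex v) : ∃ π : Equiv.Perm (Fin (m + 1)), IsCyclicallyOrdered (v ∘ π) := by
  obtain ⟨a, y, hay⟩ := h.exists_isFanBase
  let π := Tuple.sort (fanAngle v a y)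
  have hmono : StrictMono (fanAngle v a y ∘ π) :=
    (Tuple.monotone_sort _).strictMono_of_injective
      ((hay.fanAngle_injective h).comp π.injective)
  refine ⟨π, h.comp_equiv π, fun hab hbc =>
    hay.orient_nonneg_of_fanAngle_lt h (hmono hab) (hmono hbc), fun {c} hc => ?_⟩
  rw [π.surjective.range_comp]
  exact hay.mem_extremePoints_of_forall_fanAngle_le h
    (π.surjective.forall.2 fun j => hmono.monotone (hc.isTop j))

end Sorting

/-! ### Counting triangulations -/

section Counting

namespace IsWeaklyConvex

theorem affineSpan_eq_top_of_forall_mem_extremePoints {ι : Type*} [Fintype ι] {v : ι → ℝ × ℝ}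
    (h : IsWeaklyConvex v) (hext : ∀ i, v i ∈ (convexHull ℝ (Set.range v)).extremePoints ℝ)
    (hcard : 2 < Fintype.card ι) : affineSpan ℝ (Set.range v) = ⊤ := by
  classical
  obtain ⟨a, b, c, hab, hac, hbc⟩ := Fintype.two_lt_card_iff.1 hcard
  have hσ : IsTriangle v {a, b, c} := isTriangle_iff_orient_ne_zero.2 fun habc =>
    h.not_collinear_of_mem_extremePoints hab hac hbc (hext a) (hext b) (hext c)
      (orient_eq_zero_iff_collinear.1 habc)
  exact interior_convexHull_nonempty_iff_affineSpan_eq_top.1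
    (hσ.interior_nonempty.mono (interior_mono (vertexHull_subset_range v _)))

variable {m : ℕ} {v : Fin m → ℝ × ℝ} {T : Finset (Finset (Fin m))}

theorem isTriangulation_iff (h : IsWeaklyConvex v) (hspan : affineSpan ℝ (Set.range v) = ⊤) :
    IsTriangulation v T ↔ IsTriangulationOn v Finset.univ T := by
  have huniv : vertexHull v Finset.univ = convexHull ℝ (Set.range v) := by simp [vertexHull]
  refine ⟨fun ⟨htri, hcovers, hext⟩ => ⟨fun _ _ => Finset.subset_univ _, htri, ?_, ?_⟩,
    fun hT => ⟨hT.isTriangle, ?_, fun σ hσ τ hτ => ?_⟩⟩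
  · exact (huniv.trans hcovers.symm).subset.eventuallyLE
  · exact fun σ hσ τ hτ =>
      h.meetInCommonFace_of_isExtreme (htri σ hσ) (hext σ hσ τ hτ).1 (hext σ hσ τ hτ).2
  · refine (Set.iUnion₂_subset fun σ _ => vertexHull_subset_range v σ).antisymm ?_
    exact subset_of_ae_le_of_interior_nonempty (convex_convexHull ℝ _)
      (interior_convexHull_nonempty_iff_affineSpan_eq_top.2 hspan)
      (isClosed_biUnion_vertexHull v T) (huniv ▸ hT.ae_covers)
  · rw [(hT.meetInCommonFace σ hσ τ hτ).vertexHull_inter_eq]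
    exact ⟨
      isExtreme_vertexHull_of_affineIndependent (hT.isTriangle σ hσ).2 Finset.inter_subset_left,
      isExtreme_vertexHull_of_affineIndependent (hT.isTriangle τ hτ).2 Finset.inter_subset_right⟩

end IsWeaklyConvex

theorem isTriangulation_comp_perm_iff {m : ℕ} (v : Fin m → ℝ × ℝ) (π : Equiv.Perm (Fin m))
    (T : Finset (Finset (Fin m))) :
    IsTriangulation (v ∘ π) T ↔ IsTriangulation v (Equiv.finsetCongr (Equiv.finsetCongr π) T) := by
  have himage (σ : Finset (Fin m)) : v '' ↑(σ.map π.toEmbedding) = (v ∘ π) '' ↑σ := by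
    simp [Set.image_image]
  have htri (σ : Finset (Fin m)) : IsTriangle (v ∘ π) σ ↔ IsTriangle v (σ.map π.toEmbedding) :=
    and_congr (by rw [Finset.card_map]) (affineIndependent_equiv (k := ℝ)
      (π.subtypeEquiv fun i => by simp : {i // i ∈ σ} ≃ {i // i ∈ σ.map π.toEmbedding})
      (p := fun i => v i.1))
  have hunion : (⋃ σ ∈ T.map (Equiv.finsetCongr π).toEmbedding, convexHull ℝ (v '' ↑σ)) =
      ⋃ σ ∈ T, convexHull ℝ ((v ∘ π) '' ↑σ) := by
    simp only [← Finset.mem_coe, Finset.coe_map, Set.biUnion_image, Equiv.coe_toEmbedding,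
      Equiv.finsetCongr_apply, Set.image_comp]
  simp only [IsTriangulation, Equiv.finsetCongr_apply _ T, hunion, π.surjective.range_comp,
    Finset.forall_mem_map, Equiv.coe_toEmbedding, Equiv.finsetCongr_apply, himage]
  exact and_congr_left' (forall₂_congr fun σ _ => htri σ)

theorem IsWeaklyConvex.card_isTriangulation {n : ℕ} {v : Fin (n + 3) → ℝ × ℝ}
    (h : IsWeaklyConvex v) (hspan : affineSpan ℝ (Set.range v) = ⊤) :
    Nat.card {T // IsTriangulation v T} = catalan (n + 1) := by
  obtain ⟨π, hπ⟩ := h.exists_isCyclicallyOrdered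
  have hIcc : Finset.Icc 0 (Fin.last (n + 2)) = Finset.univ := Finset.Icc_bot_top
  have hiff (T : Finset (Finset (Fin (n + 3)))) : IsTriangulation v
      (Equiv.finsetCongr (Equiv.finsetCongr π) T) ↔ T ∈ triangulations (v ∘ π) 0 (Fin.last _) := by
    rw [← isTriangulation_comp_perm_iff, hπ.isTriangulation_iff
      (by rwa [π.surjective.range_comp]), mem_triangulations, hIcc]
  rw [← Nat.card_congr (Equiv.subtypeEquiv _ fun T => (hiff T).symm), Nat.card_eq_fintype_card,
    Fintype.card_coe, hπ.card_triangulations (Fin.last_pos), Fin.card_Ioo]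
  rfl

theorem triangulations_equiv_of_weakly_convex_general {n : ℕ} {p q : Fin (n + 3) → ℝ × ℝ}
    (hp : IsWeaklyConvex p) (hpspan : affineSpan ℝ (Set.range p) = ⊤)
    (hq : IsWeaklyConvex q) (hqspan : affineSpan ℝ (Set.range q) = ⊤) :
    Nonempty ({T // IsTriangulation p T} ≃ {T // IsTriangulation q T}) :=
  Finite.card_eq.1 ((hp.card_isTriangulation hpspan).trans (hq.card_isTriangulation hqspan).symm)

end Counting

/-- Let `P` be a planar configuration of `n+3` distinct points with
two-dimensional convex hull such that every point is either an extreme point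
of the hull or lies in the relative interior (open segment) of an edge of the
hull, with at most one such interior point per edge.  Let `Q` be a
configuration of `n+3` distinct points in convex position.  Then the
triangulations of `P` are in bijection with the triangulations of `Q`.
Here an edge of the hull is an extreme (face) segment `[x, y]`, `x ≠ y`. -/
theorem triangulations_equiv_of_weakly_convex (n : ℕ)
    (p : Fin (n + 3) → ℝ × ℝ) (hpinj : Function.Injective p)
    (hpdim : affineSpan ℝ (Set.range p) = ⊤)
    (hpos : ∀ i : Fin (n + 3),
      p i ∈ Set.extremePoints ℝ (convexHull ℝ (Set.range p)) ∨
      ∃ x y : ℝ × ℝ, x ≠ y ∧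
        IsExtreme ℝ (convexHull ℝ (Set.range p)) (segment ℝ x y) ∧
        p i ∈ openSegment ℝ x y)
    (honce : ∀ x y : ℝ × ℝ, x ≠ y →
      IsExtreme ℝ (convexHull ℝ (Set.range p)) (segment ℝ x y) →
      (Set.range p ∩ openSegment ℝ x y).Subsingleton)
    (q : Fin (n + 3) → ℝ × ℝ) (hqinj : Function.Injective q)
    (hqpos : ∀ i : Fin (n + 3),
      q i ∈ Set.extremePoints ℝ (convexHull ℝ (Set.range q))) :
    Nonempty
      ({T : Finset (Finset (Fin (n + 3))) // IsTriangulation p T} ≃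
       {T : Finset (Finset (Fin (n + 3))) // IsTriangulation q T}) := by
  have hq := IsWeaklyConvex.of_forall_mem_extremePoints hqinj hqpos
  exact triangulations_equiv_of_weakly_convex_general ⟨hpinj, hpos, honce⟩ hpdim hq
    (hq.affineSpan_eq_top_of_forall_mem_extremePoints hqpos (by simp))
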